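/- For each n ∈ {24, 56}, there exists a 7-connected maximal 1-plane graph G on n vertices whose underlying graph has crossing number cr(G) = 3n/4. (Consequently, the lower bound cr(G) ≥ 3n/4 for 7-connected maximal 1-plane graphs is tight for n = 24 and n = 56.) -/

import Mathlib

open Set

/-- A drawing of a simple graph in the plane: each vertex is assigned a distinct point,
and each edge a continuous arc (an injective continuous curve) joining its endpoints. -/
structure Drawing {V : Type} (G : SimpleGraph V) where
  pos : V → ℝ × ℝ
  pos_inj : Function.Injective pos
  arc : ∀ ⦃u v : V⦄, G.Adj u v → Set (ℝ × ℝ)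
  arc_symm : ∀ ⦃u v : V⦄ (h : G.Adj u v), arc h.symm = arc h
  arc_isArc : ∀ ⦃u v : V⦄ (h : G.Adj u v), ∃ γ : ℝ → ℝ × ℝ,
    ContinuousOn γ (Set.Icc 0 1) ∧ Set.InjOn γ (Set.Icc 0 1) ∧
    γ 0 = pos u ∧ γ 1 = pos v ∧ arc h = γ '' Set.Icc (0 : ℝ) 1

namespace Drawing

variable {V : Type} {G : SimpleGraph V} (D : Drawing G)

/-- The interior of the arc of an edge (the arc minus its endpoints). -/
def arcInt ⦃u v : V⦄ (h : G.Adj u v) : Set (ℝ × ℝ) :=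
  D.arc h \ {D.pos u, D.pos v}

/-- The interior of the drawing of an abstract edge `e : Sym2 V`. -/
def edgeInt (e : Sym2 V) : Set (ℝ × ℝ) :=
  {p | ∃ (u v : V) (h : G.Adj u v), e = s(u, v) ∧ p ∈ D.arcInt h}

/-- Two edges cross if they are distinct and their interiors meet. -/
def Cross (e f : Sym2 V) : Prop :=
  e ≠ f ∧ (D.edgeInt e ∩ D.edgeInt f).Nonempty

/-- The set of crossing points of the drawing. -/
def crossingSet : Set (ℝ × ℝ) :=
  {p | ∃ e f : Sym2 V, e ≠ f ∧ p ∈ D.edgeInt e ∧ p ∈ D.edgeInt f}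

/-- A good drawing: no vertex lies on the arc of a non-incident edge, any two distinct
edges meet in at most one interior point, and edges sharing an endpoint do not cross. -/
def IsGood : Prop :=
  (∀ (w : V) ⦃u v : V⦄ (h : G.Adj u v), D.pos w ∈ D.arc h → w = u ∨ w = v) ∧
  (∀ e f : Sym2 V, e ≠ f → (D.edgeInt e ∩ D.edgeInt f).Subsingleton) ∧
  (∀ ⦃u v w : V⦄ (h₁ : G.Adj u v) (h₂ : G.Adj u w), v ≠ w →
    D.arcInt h₁ ∩ D.arcInt h₂ = ∅)

/-- A drawing is 1-planar if every edge is crossed at most once. -/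
def IsOnePlanar : Prop :=
  ∀ e : Sym2 V, {f : Sym2 V | D.Cross e f}.Subsingleton

/-- The number of crossings of the drawing (each unordered pair of crossing edges
contributes one crossing). -/
noncomputable def crNum : ℕ :=
  Set.ncard {p : Sym2 V × Sym2 V | D.Cross p.1 p.2} / 2

/-- The subset of the plane covered by the drawing. -/
def drawingSet : Set (ℝ × ℝ) :=
  Set.range D.pos ∪ ⋃ (u : V) (v : V) (h : G.Adj u v), D.arc h

/-- A face of the drawing: a connected component of the complement of the drawing. -/
def IsFace (F : Set (ℝ × ℝ)) : Prop :=
  ∃ p ∉ D.drawingSet, F = connectedComponentIn D.drawingSetᶜ p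

/-- The set `∂(F)` of vertices on the boundary of a face `F`. -/
def faceVerts (F : Set (ℝ × ℝ)) : Set V :=
  {v | D.pos v ∈ frontier F}

/-- A true face of the planarization `G^×`: a face of the drawing whose boundary
contains no crossing point (i.e. it is incident with no fake vertex). -/
def IsTrueFace (F : Set (ℝ × ℝ)) : Prop :=
  D.IsFace F ∧ ∀ p ∈ D.crossingSet, p ∉ frontier F

/-- Two faces are adjacent if their boundaries share a common edge of the planarization,
i.e. they share a boundary point that is neither a vertex nor a crossing point. -/
def FaceAdj (F₁ F₂ : Set (ℝ × ℝ)) : Prop :=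
  F₁ ≠ F₂ ∧ ∃ p, p ∈ frontier F₁ ∧ p ∈ frontier F₂ ∧
    p ∉ Set.range D.pos ∧ p ∉ D.crossingSet

/-- The planarization `G^×` (crossings made into vertices of degree `4`) is a
triangulation: every face of the drawing has exactly three vertices of `G^×`
(true vertices or crossing points) on its boundary. -/
def PlanarizationIsTriangulation : Prop :=
  ∀ F : Set (ℝ × ℝ), D.IsFace F →
    ((Set.range D.pos ∪ D.crossingSet) ∩ frontier F).ncard = 3

/-- A maximal 1-plane graph: the drawing is good and 1-planar, and no edge between two
distinct non-adjacent vertices can be added to the drawing so that the result is still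
a good 1-planar drawing. -/
def IsMaximalOnePlane : Prop :=
  D.IsGood ∧ D.IsOnePlanar ∧
  ∀ u v : V, u ≠ v → ¬G.Adj u v →
    ∀ D' : Drawing (G ⊔ SimpleGraph.fromEdgeSet {s(u, v)}),
      D'.pos = D.pos →
      (∀ ⦃x y : V⦄ (h : G.Adj x y),
        D'.arc ((SimpleGraph.sup_adj _ _ _ _).mpr (Or.inl h)) = D.arc h) →
      ¬(D'.IsGood ∧ D'.IsOnePlanar)

/-- A maximal 1-plane graph is immovable if its number of crossings does not exceed that
of any good 1-planar drawing obtained from it by redrawing exactly one edge. -/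
def Immovable : Prop :=
  ∀ D' : Drawing G, D'.IsGood → D'.IsOnePlanar → D'.pos = D.pos →
    (∃ (u v : V) (_ : G.Adj u v), ∀ ⦃x y : V⦄ (h' : G.Adj x y),
      s(x, y) ≠ s(u, v) → D'.arc h' = D.arc h') →
    D.crNum ≤ D'.crNum

/-- The drawing induced on a subgraph. -/
def restrict {H : SimpleGraph V} (hle : H ≤ G) : Drawing H where
  pos := D.pos
  pos_inj := D.pos_inj
  arc := fun _ _ h => D.arc (hle h)
  arc_symm := fun _ _ h => D.arc_symm (hle h)
  arc_isArc := fun _ _ h => D.arc_isArc (hle h)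

/-- `H` is a planar skeleton `G_P` of the 1-plane graph `(G, D)`: it is obtained from `G`
by removing exactly one edge from each pair of crossing edges. -/
def IsPlanarSkeleton {H : SimpleGraph V} (_ : H ≤ G) : Prop :=
  (∀ e f : Sym2 V, D.Cross e f → (e ∈ H.edgeSet ↔ f ∉ H.edgeSet)) ∧
  ∀ e ∈ G.edgeSet, (¬∃ f, D.Cross e f) → e ∈ H.edgeSet

/-- `c_G(v)`: the number of crossing edges of the drawing incident with `v`. -/
noncomputable def cDeg (v : V) : ℕ :=
  Set.ncard {w : V | G.Adj v w ∧ ∃ f, D.Cross s(v, w) f}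

end Drawing

/-- The crossing number of a graph: the least number of crossings in a good drawing. -/
noncomputable def crossingNumber {V : Type} (G : SimpleGraph V) : ℕ :=
  sInf {n | ∃ D : Drawing G, D.IsGood ∧ D.crNum = n}

/-- A graph is `k`-connected if it stays connected after deleting any set of fewer than
`k` vertices. -/
def KConnected {V : Type} (G : SimpleGraph V) (k : ℕ) : Prop :=
  ∀ S : Set V, S.ncard < k → (G.induce Sᶜ).Connected

/-- A graph is 1-planar if it admits a good 1-planar drawing. -/
def Is1Planar {V : Type} (G : SimpleGraph V) : Prop :=
  ∃ D : Drawing G, D.IsGood ∧ D.IsOnePlanar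

/-- A maximal 1-planar graph: 1-planar, and adding any edge between distinct
non-adjacent vertices destroys 1-planarity. -/
def IsMaximal1Planar {V : Type} (G : SimpleGraph V) : Prop :=
  Is1Planar G ∧ ∀ u v : V, u ≠ v → ¬G.Adj u v →
    ¬Is1Planar (G ⊔ SimpleGraph.fromEdgeSet {s(u, v)})


/-- Continuous logarithm of a nonvanishing function on the plane. -/
theorem k5_lift2 (F : ℝ × ℝ → ℂ) (hF : Continuous F) (h0 : ∀ x, F x ≠ 0) :
    ∃ L : ℝ × ℝ → ℂ, Continuous L ∧ ∀ x, Complex.exp (L x) = F x := by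
  obtain ⟨f, ⟨-, hf⟩, -⟩ := Complex.isCoveringMapOn_exp.existsUnique_continuousMap_lifts
    (⟨F, hF⟩ : C(ℝ × ℝ, ℂ)) (a₀ := (0, 0)) (e₀ := Complex.log (F (0,0)))
    (Complex.exp_log (h0 _)) (fun x => h0 x)
  exact ⟨f, f.continuous, fun x => congrFun hf x⟩

theorem k5_uniq (f g : ℝ → ℂ) (hf : Continuous f) (hg : Continuous g) (c : ℂ)
    (h : ∀ t, Complex.exp (f t) = c * Complex.exp (g t)) : f 1 - f 0 = g 1 - g 0 := by
  have := Complex.isCoveringMap_exp.eq_of_comp_eq (g₁ := f) (g₂ := fun t => g t + (f 0 - g 0)) hf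
    (by fun_prop) (by
      funext t
      apply Subtype.ext
      simp only [Function.comp]
      rw [Complex.exp_add, Complex.exp_sub, h t, h 0]
      field_simp) 0 (by ring)
  have := congrFun this 1
  beta_reduce at this
  rw [this]; ring

/-- van Kampen-Flores for the complete graph on five vertices: given five points and curves
joining them in the complex plane, two disjoint edges have intersecting curves. -/
theorem k5_curves (p : Fin 5 → ℂ) (γ : Fin 5 → Fin 5 → ℝ → ℂ)
    (hc : ∀ i j, i < j → Continuous (γ i j))
    (h0 : ∀ i j, i < j → γ i j 0 = p i) (h1 : ∀ i j, i < j → γ i j 1 = p j)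
    (hd : ∀ i j k l, i < j → k < l → i ≠ k → i ≠ l → j ≠ k → j ≠ l → ∀ s t, γ i j s ≠ γ k l t) :
    False := by
  -- vertices avoid nonincident curves
  have hv : ∀ i j k, i < j → k ≠ i → k ≠ j → ∀ s, γ i j s ≠ p k := by
    intro i j k hij hki hkj s
    obtain ⟨l, hl1, hl2, hl3⟩ : ∃ l : Fin 5, l ≠ i ∧ l ≠ j ∧ l ≠ k := by
      revert i j k; decide
    rcases lt_or_gt_of_ne hl3 with h | h
    · have := hd i j l k hij h hl1.symm hki.symm hl2.symm hkj.symm s 1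
      rwa [h1 _ _ h] at this
    · have := hd i j k l hij h hki.symm hl1.symm hkj.symm hl2.symm s 0
      rwa [h0 _ _ h] at this
  have hp : ∀ i k, i ≠ k → p i - p k ≠ 0 := by
    intro i k hik
    obtain ⟨l, hl1, hl2⟩ : ∃ l : Fin 5, l ≠ i ∧ l ≠ k := by
      revert i k; decide
    rw [sub_ne_zero]
    rcases lt_or_gt_of_ne hl1 with h | h
    · have := hv l i k h hl2.symm hik.symm 1
      rwa [h1 _ _ h] at this
    · have := hv i l k h hik.symm hl2.symm 0
      rwa [h0 _ _ h] at this
  have hpi : (2 * (Real.pi : ℂ) * Complex.I) ≠ 0 := Complex.two_pi_I_ne_zero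
  set a : Fin 5 → Fin 5 → ℂ := fun i k => Complex.log (p i - p k) with ha
  have hea : ∀ i k, i ≠ k → Complex.exp (a i k) = p i - p k := fun i k h => Complex.exp_log (hp i k h)
  -- the half turns
  have hm : ∀ i k, ∃ m : ℤ, i ≠ k → a i k - a k i = (2 * m + 1) * (Real.pi * Complex.I) := by
    intro i k
    by_cases hik : i = k
    · exact ⟨0, fun h => absurd hik h⟩
    have : Complex.exp (a i k) = Complex.exp (a k i + Real.pi * Complex.I) := by
      rw [Complex.exp_add, hea i k hik, hea k i (Ne.symm hik), Complex.exp_pi_mul_I]; ring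
    obtain ⟨m, hm⟩ := Complex.exp_eq_exp_iff_exists_int.1 this
    exact ⟨m, fun _ => by rw [hm]; ring⟩
  choose m hm using hm
  have hN : ∀ i j k, ∃ N : ℤ, i < j → k ≠ i → k ≠ j → ∀ (Λ : ℝ → ℂ) (c : ℂ), Continuous Λ → c ≠ 0 →
      (∀ t, Complex.exp (Λ t) = c * (γ i j t - p k)) →
      Λ 1 - Λ 0 = a j k - a i k + N * (2 * Real.pi * Complex.I) := by
    intro i j k
    by_cases hh : i < j ∧ k ≠ i ∧ k ≠ j
    · obtain ⟨hij, hki, hkj⟩ := hh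
      obtain ⟨L, hL, hLe⟩ := k5_lift2 (fun x => γ i j x.1 - p k)
        (by have := hc i j hij; fun_prop) (fun x => sub_ne_zero.2 (hv i j k hij hki hkj _))
      have e1 : Complex.exp (L (1, 0) - L (0, 0)) = Complex.exp (a j k - a i k) := by
        rw [Complex.exp_sub, Complex.exp_sub, hLe, hLe, hea _ _ hkj.symm, hea _ _ hki.symm]
        simp only [h0 i j hij, h1 i j hij]
      obtain ⟨N, hN⟩ := Complex.exp_eq_exp_iff_exists_int.1 e1
      refine ⟨N, fun _ _ _ Λ c hΛ hc0 he => ?_⟩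
      rw [← hN]
      exact k5_uniq Λ (fun t => L (t, 0)) hΛ (by fun_prop) c (fun t => by rw [he, hLe])
    · exact ⟨0, fun h1 h2 h3 => absurd ⟨h1, h2, h3⟩ hh⟩
  choose N hN using hN
  -- the square relation
  have key : ∀ i j k l, i < j → k < l → i ≠ k → i ≠ l → j ≠ k → j ≠ l →
      (2 * m j k + 1) - (2 * m j l + 1) - (2 * m i k + 1) + (2 * m i l + 1)
        + 2 * (N i j k + N k l j - N k l i - N i j l) = 0 := by
    intro i j k l hij hkl hik hil hjk hjl
    obtain ⟨L, hL, hLe⟩ := k5_lift2 (fun x => γ i j x.1 - γ k l x.2)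
      (by have := hc i j hij; have := hc k l hkl; fun_prop)
      (fun x => sub_ne_zero.2 (hd i j k l hij hkl hik hil hjk hjl _ _))
    have e1 := hN i j k hij hik.symm hjk.symm (fun t => L (t, 0)) 1 (by fun_prop) one_ne_zero
      (fun t => by rw [hLe]; simp only [h0 k l hkl]; ring)
    have e2 := hN i j l hij hil.symm hjl.symm (fun t => L (t, 1)) 1 (by fun_prop) one_ne_zero
      (fun t => by rw [hLe]; simp only [h1 k l hkl]; ring)
    have e3 := hN k l i hkl hik hil (fun t => L (0, t)) (-1) (by fun_prop) (by norm_num)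
      (fun t => by rw [hLe]; simp only [h0 i j hij]; ring)
    have e4 := hN k l j hkl hjk hjl (fun t => L (1, t)) (-1) (by fun_prop) (by norm_num)
      (fun t => by rw [hLe]; simp only [h1 i j hij]; ring)
    have m1 := hm j k hjk
    have m2 := hm j l hjl
    have m3 := hm i k hik
    have m4 := hm i l hil
    have : (((2 * m j k + 1) - (2 * m j l + 1) - (2 * m i k + 1) + (2 * m i l + 1)
        + 2 * (N i j k + N k l j - N k l i - N i j l) : ℤ) : ℂ) * (Real.pi * Complex.I) = 0 := by
      push_cast
      linear_combination -e1 - e4 + e2 + e3 - m1 + m2 + m3 - m4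
    rcases mul_eq_zero.1 this with h | h
    · exact_mod_cast h
    · exact absurd (by rw [mul_assoc, h, mul_zero]) hpi
  have anti : ∀ i k, i ≠ k → m k i = - m i k - 1 := by
    intro i k hik
    have m1 := hm i k hik
    have m2 := hm k i hik.symm
    have : ((m k i + m i k + 1 : ℤ) : ℂ) * (2 * Real.pi * Complex.I) = 0 := by
      push_cast
      linear_combination -m1 - m2
    rcases mul_eq_zero.1 this with h | h
    · have : m k i + m i k + 1 = 0 := by exact_mod_cast h
      omega
    · exact absurd h hpi
  have q1 := key 0 1 2 3 (by decide) (by decide) (by decide) (by decide) (by decide) (by decide)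
  have q2 := key 0 2 1 3 (by decide) (by decide) (by decide) (by decide) (by decide) (by decide)
  have q3 := key 0 3 1 2 (by decide) (by decide) (by decide) (by decide) (by decide) (by decide)
  have q4 := key 0 1 2 4 (by decide) (by decide) (by decide) (by decide) (by decide) (by decide)
  have q5 := key 0 2 1 4 (by decide) (by decide) (by decide) (by decide) (by decide) (by decide)
  have q6 := key 0 4 1 2 (by decide) (by decide) (by decide) (by decide) (by decide) (by decide)
  have q7 := key 0 1 3 4 (by decide) (by decide) (by decide) (by decide) (by decide) (by decide)
  have q8 := key 0 3 1 4 (by decide) (by decide) (by decide) (by decide) (by decide) (by decide)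
  have q9 := key 0 4 1 3 (by decide) (by decide) (by decide) (by decide) (by decide) (by decide)
  have q10 := key 0 2 3 4 (by decide) (by decide) (by decide) (by decide) (by decide) (by decide)
  have q11 := key 0 3 2 4 (by decide) (by decide) (by decide) (by decide) (by decide) (by decide)
  have q12 := key 0 4 2 3 (by decide) (by decide) (by decide) (by decide) (by decide) (by decide)
  have q13 := key 1 2 3 4 (by decide) (by decide) (by decide) (by decide) (by decide) (by decide)
  have q14 := key 1 3 2 4 (by decide) (by decide) (by decide) (by decide) (by decide) (by decide)
  have q15 := key 1 4 2 3 (by decide) (by decide) (by decide) (by decide) (by decide) (by decide)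
  have a1 := anti 1 2 (by decide)
  have a2 := anti 1 3 (by decide)
  have a3 := anti 1 4 (by decide)
  have a4 := anti 2 3 (by decide)
  have a5 := anti 2 4 (by decide)
  have a6 := anti 3 4 (by decide)
  omega

/-- A graph is thickly planar if its edges can be represented by path-connected planar sets
containing (nonempty) sets for their ends, with vertex-disjoint edges given disjoint sets. -/
def Thick {V : Type} (Q : SimpleGraph V) : Prop :=
  ∃ (B : V → Set (ℝ × ℝ)) (E : V → V → Set (ℝ × ℝ)),
    (∀ x y, Q.Adj x y → IsPathConnected (E x y) ∧ (B x).Nonempty ∧ B x ⊆ E x y ∧ B y ⊆ E x y) ∧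
    (∀ x y z w, Q.Adj x y → Q.Adj z w → x ≠ z → x ≠ w → y ≠ z → y ≠ w → Disjoint (E x y) (E z w))

theorem Thick.mono {V : Type} {Q Q' : SimpleGraph V} (h : Q' ≤ Q) (hQ : Thick Q) : Thick Q' := by
  obtain ⟨B, E, h1, h2⟩ := hQ
  exact ⟨B, E, fun x y hxy => h1 x y (h hxy), fun x y z w a b => h2 x y z w (h a) (h b)⟩

/-- Contract the vertex `y` into `x`. -/
def contractInto {V : Type} (Q : SimpleGraph V) (x y : V) : SimpleGraph V where
  Adj u v := u ≠ v ∧ u ≠ y ∧ v ≠ y ∧ (Q.Adj u v ∨ (u = x ∧ Q.Adj y v) ∨ (v = x ∧ Q.Adj y u))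
  symm := ⟨by
    rintro u v ⟨h1, h2, h3, h4⟩
    refine ⟨h1.symm, h3, h2, ?_⟩
    rcases h4 with h | h | h
    · exact Or.inl h.symm
    · exact Or.inr (Or.inr h)
    · exact Or.inr (Or.inl h)⟩
  loopless := ⟨fun u h => h.1 rfl⟩

open Classical in
theorem Thick.contract {V : Type} {Q : SimpleGraph V} (hQ : Thick Q) {x y : V} (hxy : Q.Adj x y) :
    Thick (contractInto Q x y) := by
  obtain ⟨B, E, h1, h2⟩ := hQ
  have hxy' := hxy.ne
  -- the set of an edge in the contracted graph consists of pieces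
  have piece : ∀ u v, (contractInto Q x y).Adj u v → ∃ F : Set (ℝ × ℝ), IsPathConnected F ∧
      ((u ≠ x → B u ⊆ F ∧ (B u).Nonempty) ∧ (v ≠ x → B v ⊆ F)) ∧ (u = x ∨ v = x → E x y ⊆ F) ∧
      (∀ G : Set (ℝ × ℝ), (u = x ∨ v = x → Disjoint (E x y) G) →
        (∀ a b, Q.Adj a b → (a = u ∨ a = v ∨ a = y) → (b = u ∨ b = v ∨ b = y) →
          ((a = y ∨ b = y) → u = x ∨ v = x) →
          Disjoint (E a b) G) → Disjoint F G) := by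
    intro u v ⟨huv, huy, hvy, h⟩
    by_cases hu : u = x
    · subst hu
      have : ∃ a, (a = u ∨ a = y) ∧ Q.Adj a v := by
        rcases h with h | h | h
        · exact ⟨u, Or.inl rfl, h⟩
        · exact ⟨y, Or.inr rfl, h.2⟩
        · exact absurd h.1.symm huv
      obtain ⟨a, ha, hav⟩ := this
      refine ⟨E u y ∪ E a v, ?_, ⟨fun h => absurd rfl h, fun _ => ?_⟩, fun _ => subset_union_left, ?_⟩
      · refine (h1 _ _ hxy).1.union (h1 _ _ hav).1 ?_
        have hne := (h1 _ _ hav).2.1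
        have : B a ⊆ E u y := by
          rcases ha with rfl | rfl
          · exact (h1 _ _ hxy).2.2.1
          · exact (h1 _ _ hxy).2.2.2
        exact hne.mono (subset_inter this (h1 _ _ hav).2.2.1)
      · exact (h1 _ _ hav).2.2.2.trans subset_union_right
      · intro G hG1 hG2
        refine Disjoint.union_left (hG1 (Or.inl rfl)) (hG2 _ _ hav ?_ (Or.inr (Or.inl rfl)) fun _ => Or.inl rfl)
        tauto
    · by_cases hv : v = x
      · subst hv
        have : ∃ a, (a = v ∨ a = y) ∧ Q.Adj u a := by
          rcases h with h | h | h
          · exact ⟨v, Or.inl rfl, h⟩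
          · exact absurd h.1 hu
          · exact ⟨y, Or.inr rfl, h.2.symm⟩
        obtain ⟨a, ha, hav⟩ := this
        refine ⟨E v y ∪ E u a, ?_, ⟨fun _ => ⟨?_, (h1 _ _ hav).2.1⟩, fun h => absurd rfl h⟩,
          fun _ => subset_union_left, ?_⟩
        · refine (h1 _ _ hxy).1.union (h1 _ _ hav).1 ?_
          have hne := (h1 _ _ hav.symm).2.1
          have : B a ⊆ E v y := by
            rcases ha with rfl | rfl
            · exact (h1 _ _ hxy).2.2.1
            · exact (h1 _ _ hxy).2.2.2
          exact hne.mono (subset_inter this (h1 _ _ hav).2.2.2)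
        · exact (h1 _ _ hav).2.2.1.trans subset_union_right
        · intro G hG1 hG2
          refine Disjoint.union_left (hG1 (Or.inr rfl)) (hG2 _ _ hav (Or.inl rfl) ?_ fun _ => Or.inr rfl)
          tauto
      · have h' : Q.Adj u v := by tauto
        refine ⟨E u v, (h1 _ _ h').1, ⟨fun _ => ⟨(h1 _ _ h').2.2.1, (h1 _ _ h').2.1⟩,
          fun _ => (h1 _ _ h').2.2.2⟩, by tauto, fun G _ hG => hG u v h' (by tauto) (by tauto) ?_⟩
        tauto
  choose! F hF1 hF2 hF3 hF4 using piece
  refine ⟨fun u => if u = x then E x y else B u, F, ?_, ?_⟩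
  · intro u v huv
    refine ⟨hF1 u v huv, ?_, ?_, ?_⟩
    · beta_reduce
      split_ifs with h
      · exact (h1 _ _ hxy).1.nonempty
      · exact ((hF2 u v huv).1 h).2
    · beta_reduce
      split_ifs with h
      · exact hF3 u v huv (Or.inl h)
      · exact ((hF2 u v huv).1 h).1
    · beta_reduce
      split_ifs with h
      · exact hF3 u v huv (Or.inr h)
      · exact (hF2 u v huv).2 h
  · intro u v z w huv hzw n1 n2 n3 n4
    obtain ⟨q1, q2, q3, -⟩ := id huv
    obtain ⟨r1, r2, r3, -⟩ := id hzw
    have hno : (u = x ∨ v = x) → (z = x ∨ w = x) → False := by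
      rintro (h | h) (h' | h')
      · exact n1 (h.trans h'.symm)
      · exact n2 (h.trans h'.symm)
      · exact n3 (h.trans h'.symm)
      · exact n4 (h.trans h'.symm)
    have key : ∀ s t, (s = u ∨ s = v ∨ s = y) → (t = z ∨ t = w ∨ t = y) →
        (s = y → u = x ∨ v = x) → (t = y → z = x ∨ w = x) → t ≠ s := by
      rintro s t hs ht h3 h4 rfl
      rcases hs with rfl | rfl | rfl
      · rcases ht with h | h | h
        · exact n1 h
        · exact n2 h
        · exact q2 h
      · rcases ht with h | h | h
        · exact n3 h
        · exact n4 h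
        · exact q3 h
      · exact hno (h3 rfl) (h4 rfl)
    have out1 : ∀ s, (s = u ∨ s = v ∨ s = y) → (s = y → u = x ∨ v = x) → (z = x ∨ w = x) →
        s ≠ x ∧ s ≠ y := by
      intro s hs h3 hx'
      refine ⟨?_, fun h => hno (h3 h) hx'⟩
      rintro rfl
      rcases hs with h | h | h
      · exact hno (Or.inl h.symm) hx'
      · exact hno (Or.inr h.symm) hx'
      · exact hxy' h
    have out2 : ∀ s, (s = z ∨ s = w ∨ s = y) → (s = y → z = x ∨ w = x) → (u = x ∨ v = x) →
        s ≠ x ∧ s ≠ y := by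
      intro s hs h3 hx'
      refine ⟨?_, fun h => hno hx' (h3 h)⟩
      rintro rfl
      rcases hs with h | h | h
      · exact hno hx' (Or.inl h.symm)
      · exact hno hx' (Or.inr h.symm)
      · exact hxy' h
    refine hF4 u v huv _ ?_ ?_
    · intro hx
      refine (hF4 z w hzw _ (fun hx' => (hno hx hx').elim) ?_).symm
      intro a b hab ha hb hy
      have ha' := out2 a ha (fun h => hy (Or.inl h)) hx
      have hb' := out2 b hb (fun h => hy (Or.inr h)) hx
      exact h2 _ _ _ _ hab hxy ha'.1 ha'.2 hb'.1 hb'.2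
    · intro a b hab ha hb hy
      refine (hF4 z w hzw _ (fun hx' => ?_) ?_).symm
      · have ha' := out1 a ha (fun h => hy (Or.inl h)) hx'
        have hb' := out1 b hb (fun h => hy (Or.inr h)) hx'
        exact h2 _ _ _ _ hxy hab ha'.1.symm hb'.1.symm ha'.2.symm hb'.2.symm
      · intro c d hcd hc hd hy'
        exact h2 _ _ _ _ hcd hab (key a c ha hc (fun h => hy (Or.inl h)) fun h => hy' (Or.inl h))
          (key b c hb hc (fun h => hy (Or.inr h)) fun h => hy' (Or.inl h))
          (key a d ha hd (fun h => hy (Or.inl h)) fun h => hy' (Or.inr h))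
          (key b d hb hd (fun h => hy (Or.inr h)) fun h => hy' (Or.inr h))

theorem Thick.noK5 {V : Type} {Q : SimpleGraph V} (hQ : Thick Q) (f : Fin 5 → V)
    (hf : ∀ i j, i < j → Q.Adj (f i) (f j)) : False := by
  obtain ⟨B, E, h1, h2⟩ := hQ
  have hf' : ∀ i j, i ≠ j → f i ≠ f j := by
    intro i j hij
    rcases lt_or_gt_of_ne hij with h | h
    · exact (hf i j h).ne
    · exact (hf j i h).ne.symm
  have hne : ∀ i, (B (f i)).Nonempty := by
    intro i
    obtain ⟨j, hj⟩ : ∃ j : Fin 5, j ≠ i := by revert i; decide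
    rcases lt_or_gt_of_ne hj with h | h
    · exact (h1 _ _ (hf j i h).symm).2.1
    · exact (h1 _ _ (hf i j h)).2.1
  choose p hp using hne
  have hpath : ∀ i j, ∃ γ : ℝ → ℝ × ℝ, i < j → Continuous γ ∧ γ 0 = p i ∧ γ 1 = p j ∧
      ∀ t, γ t ∈ E (f i) (f j) := by
    intro i j
    by_cases hij : i < j
    · obtain ⟨a, b, c, d⟩ := h1 _ _ (hf i j hij)
      have hJ := a.joinedIn _ (c (hp i)) _ (d (hp j))
      refine ⟨hJ.somePath.extend, fun _ => ⟨hJ.somePath.continuous_extend, by simp, by simp, fun t => ?_⟩⟩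
      exact hJ.somePath_mem _
    · exact ⟨fun _ => 0, fun h => absurd h hij⟩
  choose γ hγ using hpath
  let e := Complex.equivRealProdCLM.symm
  refine k5_curves (fun i => e (p i)) (fun i j t => e (γ i j t)) ?_ ?_ ?_ ?_
  · intro i j hij; exact e.continuous.comp (hγ i j hij).1
  · intro i j hij; simp only [(hγ i j hij).2.1]
  · intro i j hij; simp only [(hγ i j hij).2.2.1]
  · intro i j k l hij hkl a b c d s t h
    have h' := e.injective h
    have := h2 _ _ _ _ (hf i j hij) (hf k l hkl) (hf' _ _ a) (hf' _ _ b) (hf' _ _ c) (hf' _ _ d)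
    exact Set.disjoint_left.1 this ((hγ i j hij).2.2.2 s) (h' ▸ (hγ k l hkl).2.2.2 t)

theorem Thick.noK5' {V : Type} {Q : SimpleGraph V} (hQ : Thick Q) {a b c d e : V}
    (hab : Q.Adj a b) (hac : Q.Adj a c) (had : Q.Adj a d) (hae : Q.Adj a e)
    (hbc : Q.Adj b c) (hbd : Q.Adj b d) (hbe : Q.Adj b e)
    (hcd : Q.Adj c d) (hce : Q.Adj c e) (hde : Q.Adj d e) : False := by
  refine hQ.noK5 ![a, b, c, d, e] ?_
  intro i j hij
  fin_cases i <;> fin_cases j <;> first | (exact absurd hij (by decide)) | assumption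

theorem contract_count {V : Type} [Finite V] (Q : SimpleGraph V) {x y : V} (hxy : Q.Adj x y) :
    Q.edgeSet.ncard ≤ (contractInto Q x y).edgeSet.ncard + 1 + {z | Q.Adj x z ∧ Q.Adj y z}.ncard := by
  have hne := hxy.ne
  set A : Set (Sym2 V) := {e | e ∈ Q.edgeSet ∧ y ∉ e} with hA
  set R : Set V := {z | Q.Adj y z ∧ z ≠ x ∧ ¬ Q.Adj x z} with hR
  set C : Set V := {z | Q.Adj x z ∧ Q.Adj y z} with hC
  have h1 : Q.edgeSet ⊆ A ∪ ((fun z => s(y, z)) '' ({x} ∪ C ∪ R)) := by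
    intro e
    induction e using Sym2.ind with
    | _ a b =>
      intro hab
      have hab' : Q.Adj a b := hab
      by_cases hy : y ∈ s(a, b)
      · right
        obtain ⟨z, hz⟩ := Sym2.mem_iff_exists.1 hy
        have hyz : Q.Adj y z := by
          have : s(y, z) ∈ Q.edgeSet := hz ▸ hab
          exact this
        refine ⟨z, ?_, hz.symm⟩
        by_cases h1 : z = x
        · exact Or.inl (Or.inl h1)
        · by_cases h2 : Q.Adj x z
          · exact Or.inl (Or.inr ⟨h2, hyz⟩)
          · exact Or.inr ⟨hyz, h1, h2⟩
      · exact Or.inl ⟨hab, hy⟩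
  have h2 : A ∪ ((fun z => s(x, z)) '' R) ⊆ (contractInto Q x y).edgeSet := by
    rintro e (⟨he, hy⟩ | ⟨z, ⟨hz1, hz2, hz3⟩, rfl⟩)
    · induction e using Sym2.ind with
      | _ a b =>
        have hab : Q.Adj a b := he
        rw [Sym2.mem_iff, not_or] at hy
        exact ⟨hab.ne, fun h => hy.1 h.symm, fun h => hy.2 h.symm, Or.inl hab⟩
    · exact ⟨fun h => hz2 h.symm, hne, hz1.ne.symm, Or.inr (Or.inl ⟨rfl, hz1⟩)⟩
  have hd : Disjoint A ((fun z => s(x, z)) '' R) := by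
    rw [Set.disjoint_left]
    rintro e ⟨he, -⟩ ⟨z, ⟨-, -, hz⟩, rfl⟩
    exact hz he
  have hinj : Function.Injective (fun z => s(x, z)) := fun a b h => Sym2.congr_right.1 h
  have e1 := Set.ncard_le_ncard h1 (Set.toFinite _)
  have e2 := Set.ncard_le_ncard h2 (Set.toFinite _)
  rw [Set.ncard_union_eq hd (Set.toFinite _) (Set.toFinite _), Set.ncard_image_of_injective _ hinj] at e2
  have e3 := Set.ncard_union_le A ((fun z => s(y, z)) '' ({x} ∪ C ∪ R))
  have e4 := Set.ncard_image_le (f := fun z => s(y, z)) (Set.toFinite ({x} ∪ C ∪ R))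
  have e5 := Set.ncard_union_le ({x} ∪ C) R
  have e6 := Set.ncard_union_le {x} C
  rw [Set.ncard_singleton] at e6
  omega

open Classical in
theorem mader_local {V : Type} [Fintype V] {Q : SimpleGraph V} (hQ : Thick Q) (v : V)
    (h5 : (Q.neighborFinset v).card ≤ 5)
    (h4 : 4 ≤ (Q.neighborFinset v).card)
    (hc : ∀ w ∈ Q.neighborFinset v, 3 ≤ ((Q.neighborFinset v).filter (Q.Adj w)).card) : False := by
  set N := Q.neighborFinset v with hN
  have hv : ∀ w ∈ N, Q.Adj v w := fun w hw => by simpa [hN] using hw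
  -- at most one missing
  have miss : ∀ w ∈ N, (N.erase w |>.filter (fun z => ¬ Q.Adj w z)).card + 4 ≤ N.card := by
    intro w hw
    have h1 := Finset.card_filter_add_card_filter_not (s := N.erase w) (fun z => Q.Adj w z)
    have h2 : (N.erase w).filter (fun z => Q.Adj w z) = N.filter (Q.Adj w) := by
      ext z
      simp only [Finset.mem_filter, Finset.mem_erase]
      constructor
      · rintro ⟨⟨_, h⟩, h'⟩; exact ⟨h, h'⟩
      · rintro ⟨h, h'⟩; exact ⟨⟨h'.ne.symm, h⟩, h'⟩
    rw [h2, Finset.card_erase_of_mem hw] at h1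
    have := hc w hw
    omega
  have miss2 : ∀ w ∈ N, ∀ a ∈ N, ∀ b ∈ N, a ≠ b → a ≠ w → b ≠ w → Q.Adj w a ∨ Q.Adj w b := by
    intro w hw a ha b hb hab haw hbw
    by_contra hcon
    rw [not_or] at hcon
    have h1 := miss w hw
    have : ({a, b} : Finset V) ⊆ (N.erase w).filter (fun z => ¬ Q.Adj w z) := by
      intro z hz
      simp only [Finset.mem_insert, Finset.mem_singleton] at hz
      rcases hz with rfl | rfl
      · exact Finset.mem_filter.2 ⟨Finset.mem_erase.2 ⟨haw, ha⟩, hcon.1⟩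
      · exact Finset.mem_filter.2 ⟨Finset.mem_erase.2 ⟨hbw, hb⟩, hcon.2⟩
    have := Finset.card_le_card this
    rw [Finset.card_pair hab] at this
    omega
  by_cases hall : ∀ a ∈ N, ∀ b ∈ N, a ≠ b → Q.Adj a b
  · obtain ⟨T, hT, hT4⟩ := Finset.exists_subset_card_eq h4
    obtain ⟨a, b, c, d, hab, hac, had, hbc, hbd, hcd, rfl⟩ := Finset.card_eq_four.1 hT4
    have ha : a ∈ N := hT (by simp)
    have hb : b ∈ N := hT (by simp)
    have hc : c ∈ N := hT (by simp)
    have hd : d ∈ N := hT (by simp)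
    exact hQ.noK5' (hv a ha) (hv b hb) (hv c hc) (hv d hd) (hall a ha b hb hab) (hall a ha c hc hac)
      (hall a ha d hd had) (hall b hb c hc hbc) (hall b hb d hd hbd) (hall c hc d hd hcd)
  · push Not at hall
    obtain ⟨a, ha, b, hb, hab, hnab⟩ := hall
    have h5' : N.card = 5 := by
      have h1 := miss a ha
      have : 0 < ((N.erase a).filter (fun z => ¬ Q.Adj a z)).card :=
        Finset.card_pos.2 ⟨b, by simp [hb, hab.symm, hnab]⟩
      omega
    have hT3 : ((N.erase a).erase b).card = 3 := by
      rw [Finset.card_erase_of_mem (by simp [hb, hab.symm]), Finset.card_erase_of_mem ha]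
      omega
    obtain ⟨c, d, e, hcd, hce, hde, hT⟩ := Finset.card_eq_three.1 hT3
    have mm : ∀ z, z ∈ ({c, d, e} : Finset V) → z ∈ N ∧ z ≠ a ∧ z ≠ b := by
      intro z hz
      rw [← hT] at hz
      simp only [Finset.mem_erase] at hz
      exact ⟨hz.2.2, hz.2.1, hz.1⟩
    have hc' := mm c (by simp)
    have hd' := mm d (by simp)
    have he' := mm e (by simp)
    have hA : ∀ z, z ∈ N ∧ z ≠ a ∧ z ≠ b → Q.Adj a z ∧ Q.Adj b z := by
      rintro z ⟨h1, h2, h3⟩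
      constructor
      · exact (miss2 a ha b hb z h1 h3.symm hab.symm h2).resolve_left hnab
      · exact (miss2 b hb a ha z h1 h2.symm hab h3).resolve_left fun h => hnab h.symm
    have fin : ∀ p q r, (p ∈ N ∧ p ≠ a ∧ p ≠ b) → (q ∈ N ∧ q ≠ a ∧ q ≠ b) → (r ∈ N ∧ r ≠ a ∧ r ≠ b) →
        p ≠ q → p ≠ r → Q.Adj q r → False := by
      intro p q r hp hq hr hpq hpr hqr
      have hap := (hA p hp).1
      have hK := hQ.contract hap
      have lift : ∀ s t, s ≠ p → t ≠ p → Q.Adj s t → (contractInto Q a p).Adj s t :=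
        fun s t h1 h2 h => ⟨h.ne, h1, h2, Or.inl h⟩
      have hvp := (hv p hp.1).ne
      have hap' := hap.ne
      have hbp := hp.2.2.symm
      have hab' : (contractInto Q a p).Adj a b :=
        ⟨hab, hap', hbp, Or.inr (Or.inl ⟨rfl, (hA p hp).2.symm⟩)⟩
      exact hK.noK5' (lift v a hvp hap' (hv a ha)) (lift v b hvp hbp (hv b hb))
        (lift v q hvp hpq.symm (hv q hq.1)) (lift v r hvp hpr.symm (hv r hr.1)) hab'
        (lift a q hap' hpq.symm (hA q hq).1) (lift a r hap' hpr.symm (hA r hr).1)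
        (lift b q hbp hpq.symm (hA q hq).2) (lift b r hbp hpr.symm (hA r hr).2)
        (lift q r hpq.symm hpr.symm hqr)
    by_cases h : Q.Adj d e
    · exact fin c d e hc' hd' he' hcd hce h
    · have : Q.Adj d c := (miss2 d hd'.1 c hc'.1 e he'.1 hce hcd hde.symm).resolve_right h
      exact fin e c d he' hc' hd' hce.symm hde.symm this.symm

open Classical in
theorem mader {V : Type} [Fintype V] (k : ℕ) (hk : 4 ≤ k) : ∀ (Q : SimpleGraph V) (S : Finset V),
    Thick Q → (∀ u v, Q.Adj u v → u ∈ S) → S.card = k → Q.edgeSet.ncard + 6 ≤ 3 * k := by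
  induction k, hk using Nat.le_induction with
  | base =>
    intro Q S _ hS hcard
    have : Q.edgeSet ⊆ ((S.sym2.filter (fun e => ¬ e.IsDiag) : Finset (Sym2 V)) : Set (Sym2 V)) := by
      intro e
      induction e using Sym2.ind with
      | _ a b =>
        intro h
        have h' : Q.Adj a b := h
        simp [hS a b h', hS b a h'.symm, h'.ne]
    have h1 := Set.ncard_le_ncard this (Set.toFinite _)
    rw [Set.ncard_coe_finset] at h1
    have h2 : (S.sym2.filter (fun e => ¬ e.IsDiag)).card = S.card.choose 2 := by
      rw [← Sym2.card_image_offDiag]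
      congr 1
      ext e
      induction e using Sym2.ind with
      | _ a b =>
        simp only [Finset.mem_filter, Finset.mk_mem_sym2_iff, Sym2.mk_isDiag_iff, Finset.mem_image,
          Finset.mem_offDiag, Prod.exists]
        constructor
        · rintro ⟨⟨h1, h2⟩, h3⟩; exact ⟨a, b, ⟨h1, h2, h3⟩, rfl⟩
        · rintro ⟨c, d, ⟨h1, h2, h3⟩, h⟩
          rcases Sym2.eq_iff.1 h with ⟨rfl, rfl⟩ | ⟨rfl, rfl⟩
          · exact ⟨⟨h1, h2⟩, h3⟩
          · exact ⟨⟨h2, h1⟩, h3.symm⟩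
    rw [h2, hcard] at h1
    have : Nat.choose 4 2 = 6 := by decide
    omega
  | succ k hk ih =>
    intro Q₀ S hQ₀ hS₀ hcard
    by_contra hcon
    obtain ⟨s, hs, hscard⟩ := Set.exists_subset_card_eq (s := Q₀.edgeSet) (n := 3 * (k + 1) - 5) (by omega)
    set Q := SimpleGraph.fromEdgeSet s with hQdef
    have hQle : Q ≤ Q₀ := by
      intro a b hab
      rw [hQdef, SimpleGraph.fromEdgeSet_adj] at hab
      exact hs hab.1
    have hE : Q.edgeSet = s := by
      rw [hQdef, SimpleGraph.edgeSet_fromEdgeSet, sdiff_eq_left, Set.disjoint_left]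
      intro e he hd
      exact Q₀.not_isDiag_of_mem_edgeSet (hs he) hd
    have hQ := hQ₀.mono hQle
    have hS : ∀ u v, Q.Adj u v → u ∈ S := fun u v h => hS₀ u v (hQle h)
    have hEc : Q.edgeSet.ncard = 3 * (k + 1) - 5 := by rw [hE, hscard]
    clear hE hQle
    clear_value Q
    -- contraction step
    have hcomm : ∀ x y, Q.Adj x y → 3 ≤ {z | Q.Adj x z ∧ Q.Adj y z}.ncard := by
      intro x y hxy
      have h1 := contract_count Q hxy
      have h2 := ih (contractInto Q x y) (S.erase y) (hQ.contract hxy) (by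
        rintro u v ⟨h1, h2, h3, h4⟩
        refine Finset.mem_erase.2 ⟨h2, ?_⟩
        rcases h4 with h | ⟨rfl, -⟩ | ⟨-, h⟩
        · exact hS _ _ h
        · exact hS _ _ hxy
        · exact hS _ _ h.symm) (by
        rw [Finset.card_erase_of_mem (hS y x hxy.symm), hcard]; rfl)
      omega
    obtain ⟨v, hvS, hv5⟩ : ∃ v ∈ S, Q.degree v ≤ 5 := by
      by_contra hall
      push Not at hall
      have h1 := Q.sum_degrees_eq_twice_card_edges
      have h2 : ∑ v ∈ S, Q.degree v ≤ ∑ v, Q.degree v :=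
        Finset.sum_le_sum_of_subset (Finset.subset_univ S)
      have h3 : S.card * 6 ≤ ∑ v ∈ S, Q.degree v := by
        rw [← smul_eq_mul]
        exact Finset.card_nsmul_le_sum S _ 6 (fun v hv => hall v hv)
      have h4 : Q.edgeFinset.card = Q.edgeSet.ncard := by
        rw [← SimpleGraph.coe_edgeFinset, Set.ncard_coe_finset]
      omega
    have hcomm' : ∀ w ∈ Q.neighborFinset v, 3 ≤ ((Q.neighborFinset v).filter (Q.Adj w)).card := by
      intro w hw
      have hvw : Q.Adj v w := by simpa using hw
      have := hcomm v w hvw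
      rw [← Set.ncard_coe_finset]
      convert this using 2
      ext z
      simp
    rcases (Q.neighborFinset v).eq_empty_or_nonempty with h0 | ⟨w, hw⟩
    · have hiso : ∀ u, ¬ Q.Adj v u := by
        intro u hu
        have : u ∈ Q.neighborFinset v := by simpa using hu
        rw [h0] at this
        simp at this
      have h2 := ih Q (S.erase v) hQ (by
        intro a b hab
        refine Finset.mem_erase.2 ⟨?_, hS a b hab⟩
        rintro rfl
        exact hiso b hab) (by rw [Finset.card_erase_of_mem hvS, hcard]; rfl)
      omega
    · refine mader_local hQ v (by simpa using hv5) ?_ hcomm'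
      have h1 := hcomm' w hw
      have h2 : (Q.neighborFinset v).filter (Q.Adj w) ⊆ (Q.neighborFinset v).erase w := by
        intro z hz
        rw [Finset.mem_filter] at hz
        exact Finset.mem_erase.2 ⟨hz.2.ne.symm, hz.1⟩
      have h3 := Finset.card_le_card h2
      rw [Finset.card_erase_of_mem hw] at h3
      omega

theorem Drawing.Cross.symm {V : Type} {G : SimpleGraph V} {D : Drawing G} {e f : Sym2 V}
    (h : D.Cross e f) : D.Cross f e :=
  ⟨h.1.symm, by rw [Set.inter_comm]; exact h.2⟩

open Classical in
theorem Drawing.exists_cover {V : Type} [Fintype V] {G : SimpleGraph V} (D : Drawing G) :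
    ∃ R : Set (Sym2 V), R.ncard ≤ D.crNum ∧ ∀ e f, D.Cross e f → e ∈ R ∨ f ∈ R := by
  let X : SimpleGraph (Sym2 V) :=
    { Adj := D.Cross, symm := ⟨fun _ _ h => h.symm⟩, loopless := ⟨fun _ h => h.1 rfl⟩ }
  have h1 : {p : Sym2 V × Sym2 V | D.Cross p.1 p.2}.ncard = 2 * X.edgeSet.ncard := by
    have h2 := X.dart_card_eq_twice_card_edges
    have h3 : X.edgeFinset.card = X.edgeSet.ncard := by
      rw [← SimpleGraph.coe_edgeFinset, Set.ncard_coe_finset]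
    rw [h3] at h2
    rw [← h2, ← Nat.card_eq_fintype_card, ← Nat.card_coe_set_eq]
    refine Nat.card_congr ⟨fun p => ⟨p.1, p.2⟩, fun d => ⟨d.toProd, d.adj⟩, fun _ => rfl, fun _ => rfl⟩
  refine ⟨(fun c : Sym2 (Sym2 V) => (Quot.out c).1) '' X.edgeSet, ?_, ?_⟩
  · rw [Drawing.crNum, h1]
    have := Set.ncard_image_le (f := fun c : Sym2 (Sym2 V) => (Quot.out c).1) (Set.toFinite X.edgeSet)
    omega
  · intro e f h
    have hmem : s(e, f) ∈ X.edgeSet := h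
    have : (Quot.out s(e, f)).1 ∈ s(e, f) := Sym2.out_fst_mem _
    rcases Sym2.mem_iff.1 this with h' | h'
    · exact Or.inl ⟨_, hmem, h'⟩
    · exact Or.inr ⟨_, hmem, h'⟩

theorem Drawing.arc_pathConnected {V : Type} {G : SimpleGraph V} (D : Drawing G) {u v : V}
    (h : G.Adj u v) : IsPathConnected (D.arc h) := by
  obtain ⟨γ, hc, -, -, -, he⟩ := D.arc_isArc h
  rw [he]
  exact ((convex_Icc (0 : ℝ) 1).isPathConnected ⟨0, by simp⟩).image' hc

theorem Drawing.pos_mem_arc {V : Type} {G : SimpleGraph V} (D : Drawing G) {u v : V}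
    (h : G.Adj u v) : D.pos u ∈ D.arc h ∧ D.pos v ∈ D.arc h := by
  obtain ⟨γ, -, -, h0, h1, he⟩ := D.arc_isArc h
  rw [he]
  exact ⟨⟨0, by simp, h0⟩, ⟨1, by simp, h1⟩⟩

theorem Drawing.cr_lower {n : ℕ} (hn : 4 ≤ n) {G : SimpleGraph (Fin n)} (D : Drawing G)
    (hD : D.IsGood) : G.edgeSet.ncard + 6 ≤ 3 * n + D.crNum := by
  obtain ⟨R, hR, hcov⟩ := D.exists_cover
  have hT : Thick (G.deleteEdges R) := by
    refine ⟨fun x => {D.pos x}, fun x y => {p | ∃ h : G.Adj x y, p ∈ D.arc h}, ?_, ?_⟩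
    · intro x y hxy
      have hxy' : G.Adj x y := (SimpleGraph.deleteEdges_adj.1 hxy).1
      have he : {p | ∃ h : G.Adj x y, p ∈ D.arc h} = D.arc hxy' := by
        ext p; exact ⟨fun ⟨_, h⟩ => h, fun h => ⟨hxy', h⟩⟩
      have := D.pos_mem_arc hxy'
      refine ⟨?_, ?_, ?_, ?_⟩
      · simp only [he]; exact D.arc_pathConnected hxy'
      · exact Set.singleton_nonempty _
      · simp only [he]; exact Set.singleton_subset_iff.2 this.1
      · simp only [he]; exact Set.singleton_subset_iff.2 this.2
    · intro x y z w hxy hzw n1 n2 n3 n4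
      rw [SimpleGraph.deleteEdges_adj] at hxy hzw
      rw [Set.disjoint_left]
      rintro p ⟨h1, hp1⟩ ⟨h2, hp2⟩
      have a1 : p ≠ D.pos x := by
        rintro rfl; exact (hD.1 x h2 hp2).elim n1 n2
      have a2 : p ≠ D.pos y := by
        rintro rfl; exact (hD.1 y h2 hp2).elim n3 n4
      have a3 : p ≠ D.pos z := by
        rintro rfl; exact (hD.1 z h1 hp1).elim n1.symm n3.symm
      have a4 : p ≠ D.pos w := by
        rintro rfl; exact (hD.1 w h1 hp1).elim n2.symm n4.symm
      have hcr : D.Cross s(x, y) s(z, w) := by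
        refine ⟨?_, p, ⟨x, y, h1, rfl, hp1, by simp [a1, a2]⟩, ⟨z, w, h2, rfl, hp2, by simp [a3, a4]⟩⟩
        intro h
        rcases Sym2.eq_iff.1 h with h | h
        · exact n1 h.1
        · exact n2 h.1
      rcases hcov _ _ hcr with h | h
      · exact hxy.2 h
      · exact hzw.2 h
  have h1 := mader n hn (G.deleteEdges R) Finset.univ hT (fun _ _ _ => Finset.mem_univ _) (by simp)
  rw [SimpleGraph.edgeSet_deleteEdges] at h1
  have h2 := Set.ncard_le_ncard_sdiff_add_ncard G.edgeSet R (Set.toFinite _)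
  omega

/-- Bool test: `x, L, y` is a path with respect to `adj`. -/
def chainB (adj : ℕ → ℕ → Bool) (y : ℕ) : List ℕ → ℕ → Bool
  | [], x => adj x y
  | a :: L, x => adj x a && chainB adj y L a

def memB (a : ℕ) : List ℕ → Bool
  | [] => false
  | b :: L => Nat.beq a b || memB a L

def nodupB : List ℕ → Bool
  | [] => true
  | a :: L => !(memB a L) && nodupB L

theorem memB_iff (a : ℕ) (L : List ℕ) : memB a L = true ↔ a ∈ L := by
  induction L with
  | nil => simp [memB]
  | cons b L ih => simp [memB, ih]

theorem nodupB_iff (L : List ℕ) : nodupB L = true ↔ L.Nodup := by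
  induction L with
  | nil => simp [nodupB]
  | cons a L ih =>
    have := memB_iff a L
    simp only [nodupB, Bool.and_eq_true, ih, List.nodup_cons, Bool.not_eq_true', ← this]
    simp

/-- Disjoint lists, each meeting `S`: there are at most `|S|` of them. -/
theorem lists_le (ps : List (List ℕ)) : ∀ S : Finset ℕ, ps.flatten.Nodup →
    (∀ L ∈ ps, ∃ a ∈ L, a ∈ S) → ps.length ≤ S.card := by
  induction ps with
  | nil => intro S _ _; simp
  | cons L ps ih =>
    intro S hnd h
    rw [List.flatten_cons, List.nodup_append] at hnd
    obtain ⟨-, h2, h3⟩ := hnd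
    obtain ⟨a, haL, haS⟩ := h L (by simp)
    have := ih (S.erase a) h2 (by
      intro L' hL'
      obtain ⟨b, hb, hbS⟩ := h L' (by simp [hL'])
      refine ⟨b, hb, Finset.mem_erase.2 ⟨?_, hbS⟩⟩
      exact (h3 a haL b (List.mem_flatten.2 ⟨L', hL', hb⟩)).symm)
    rw [Finset.card_erase_of_mem haS] at this
    have : 0 < S.card := Finset.card_pos.2 ⟨a, haS⟩
    simp only [List.length_cons]
    omega

def stepR (adj : ℕ → ℕ → Bool) (S : Finset ℕ) (a b : ℕ) : Prop := adj a b = true ∧ b ∉ S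

theorem chain_reach (adj : ℕ → ℕ → Bool) (S : Finset ℕ) (y : ℕ) (hy : y ∉ S) (L : List ℕ) :
    ∀ x, chainB adj y L x = true → (∀ a ∈ L, a ∉ S) → Relation.ReflTransGen (stepR adj S) x y := by
  induction L with
  | nil => intro x h _; exact Relation.ReflTransGen.single ⟨h, hy⟩
  | cons a L ih =>
    intro x h hL
    simp only [chainB, Bool.and_eq_true] at h
    exact Relation.ReflTransGen.head ⟨h.1, hL a (by simp)⟩ (ih a h.2 fun b hb => hL b (by simp [hb]))

theorem stepR_symm (adj : ℕ → ℕ → Bool) (hsymm : ∀ a b, adj a b = true → adj b a = true)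
    (S : Finset ℕ) (x y : ℕ) (hx : x ∉ S)
    (h : Relation.ReflTransGen (stepR adj S) x y) : y ∉ S ∧ Relation.ReflTransGen (stepR adj S) y x := by
  induction h with
  | refl => exact ⟨hx, .refl⟩
  | tail _ h2 ih => exact ⟨h2.2, Relation.ReflTransGen.head ⟨hsymm _ _ h2.1, ih.1⟩ ih.2⟩

theorem reach_all (n : ℕ) (adj : ℕ → ℕ → Bool) (hsymm : ∀ a b, adj a b = true → adj b a = true)
    (hpar : ∀ v, 0 < v → v < n → ∃ w < v, adj v w = true)
    (hcert : ∀ x y s, y < x → adj x s = true → adj y s = true → adj x y = false →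
      ∃ ps : List (List ℕ), ps.length = 7 ∧ ps.flatten.Nodup ∧ ∀ L ∈ ps, chainB adj y L x = true)
    (S : Finset ℕ) : S.card < 7 → ∀ x y, x < n → y < n → x ∉ S → y ∉ S →
      Relation.ReflTransGen (stepR adj S) x y := by
  have hpair : ∀ S : Finset ℕ, S.card < 7 → ∀ x y s, adj x s = true → adj y s = true →
      x ∉ S → y ∉ S → Relation.ReflTransGen (stepR adj S) x y := by
    intro S hS
    have main : ∀ x y s, y < x → adj x s = true → adj y s = true →
      x ∉ S → y ∉ S → Relation.ReflTransGen (stepR adj S) x y := by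
      intro x y s hlt h1 h2 hx hy
      by_cases hxy : adj x y = true
      · exact .single ⟨hxy, hy⟩
      · obtain ⟨ps, hl, hnd, hch⟩ := hcert x y s hlt h1 h2 (by simpa using hxy)
        have : ∃ L ∈ ps, ∀ a ∈ L, a ∉ S := by
          by_contra hcon
          push Not at hcon
          have := lists_le ps S hnd hcon
          omega
        obtain ⟨L, hL, hLS⟩ := this
        exact chain_reach adj S y hy L x (hch L hL) hLS
    intro x y s h1 h2 hx hy
    rcases lt_trichotomy x y with h | h | h
    · exact (stepR_symm adj hsymm S y x hy (main y x s h h2 h1 hy hx)).2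
    · subst h; exact .refl
    · exact main x y s h h1 h2 hx hy
  induction S using Finset.induction_on with
  | empty =>
    intro _ x y hx hy _ _
    have h0 : ∀ v, v < n → Relation.ReflTransGen (stepR adj ∅) v 0 := by
      intro v
      induction v using Nat.strong_induction_on with
      | _ v ih =>
        intro hv
        rcases Nat.eq_zero_or_pos v with rfl | hpos
        · exact .refl
        · obtain ⟨w, hw, hvw⟩ := hpar v hpos hv
          exact .head ⟨hvw, by simp⟩ (ih w hw (hw.trans hv))
    exact (h0 x hx).trans (stepR_symm adj hsymm ∅ y 0 (by simp) (h0 y hy)).2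
  | insert s S hs ih =>
    intro hcard x y hx hy hxS hyS
    rw [Finset.card_insert_of_notMem hs] at hcard
    rw [Finset.mem_insert, not_or] at hxS hyS
    have hw := ih (by omega) x y hx hy hxS.2 hyS.2
    have hcard' : (insert s S).card < 7 := by rw [Finset.card_insert_of_notMem hs]; omega
    have key : ∀ z, Relation.ReflTransGen (stepR adj S) x z →
        (z ≠ s → Relation.ReflTransGen (stepR adj (insert s S)) x z) ∧
        (z = s → ∃ z', adj z' s = true ∧ z' ∉ insert s S ∧
          Relation.ReflTransGen (stepR adj (insert s S)) x z') := by
      intro z hz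
      induction hz with
      | refl => exact ⟨fun _ => .refl, fun h => absurd h hxS.1⟩
      | @tail b c hb hbc ihb =>
        have hbS : b ∉ S := (stepR_symm adj hsymm S x b hxS.2 hb).1
        by_cases hbs : b = s
        · obtain ⟨z', h1, h2, h3⟩ := ihb.2 hbs
          constructor
          · intro hc
            refine h3.trans (hpair _ hcard' z' c s h1 (hsymm _ _ (hbs ▸ hbc.1)) h2 ?_)
            simp [hc, hbc.2]
          · intro _
            exact ⟨z', h1, h2, h3⟩
        · have h3 := ihb.1 hbs
          constructor
          · intro hc
            exact h3.tail ⟨hbc.1, by simp [hc, hbc.2]⟩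
          · intro hc
            exact ⟨b, hc ▸ hbc.1, by simp [hbs, hbS], h3⟩
    exact (key y hw).1 hyS.1

theorem kconn_of (n : ℕ) (hn : 7 ≤ n) (adj : ℕ → ℕ → Bool)
    (hlt : ∀ a b, adj a b = true → b < n)
    (hsymm : ∀ a b, adj a b = true → adj b a = true)
    (hpar : ∀ v, 0 < v → v < n → ∃ w < v, adj v w = true)
    (hcert : ∀ x y s, y < x → adj x s = true → adj y s = true → adj x y = false →
      ∃ ps : List (List ℕ), ps.length = 7 ∧ ps.flatten.Nodup ∧ ∀ L ∈ ps, chainB adj y L x = true)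
    (G : SimpleGraph (Fin n)) (hG : ∀ a b : Fin n, adj a b = true → G.Adj a b) : KConnected G 7 := by
  classical
  intro S hS
  have hfin : S.Finite := Set.toFinite S
  let T : Finset ℕ := hfin.toFinset.image Fin.val
  have hT : T.card < 7 := by
    have h1 : T.card ≤ hfin.toFinset.card := Finset.card_image_le
    rw [← Set.ncard_eq_toFinset_card S hfin] at h1
    omega
  have hmem : ∀ a : Fin n, (a : ℕ) ∈ T ↔ a ∈ S := by
    intro a
    simp only [T, Finset.mem_image, Set.Finite.mem_toFinset]
    constructor
    · rintro ⟨b, hb, h⟩; rwa [← Fin.ext h]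
    · intro h; exact ⟨a, h, rfl⟩
  have hne : ∃ a : Fin n, a ∈ Sᶜ := by
    by_contra hcon
    push Not at hcon
    have : S = Set.univ := by
      ext a; simpa using hcon a
    rw [this, Set.ncard_univ, Nat.card_eq_fintype_card, Fintype.card_fin] at hS
    omega
  rw [SimpleGraph.connected_iff]
  refine ⟨?_, let ⟨a, ha⟩ := hne; ⟨⟨a, ha⟩⟩⟩
  rintro ⟨x, hx⟩ ⟨y, hy⟩
  have hr := reach_all n adj hsymm hpar hcert T hT x y x.2 y.2 (by rwa [hmem]) (by rwa [hmem])
  have key : ∀ z : ℕ, Relation.ReflTransGen (stepR adj T) x z → ∃ (hz : z < n) (hzS : (⟨z, hz⟩ : Fin n) ∈ Sᶜ),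
      (G.induce Sᶜ).Reachable ⟨x, hx⟩ ⟨⟨z, hz⟩, hzS⟩ := by
    intro z hz
    induction hz with
    | refl => exact ⟨x.2, hx, SimpleGraph.Reachable.refl _⟩
    | @tail b c _ hbc ih =>
      obtain ⟨hb, hbS, hr⟩ := ih
      have hc : c < n := hlt _ _ hbc.1
      have hcS : (⟨c, hc⟩ : Fin n) ∈ Sᶜ := fun h => hbc.2 ((hmem ⟨c, hc⟩).2 h)
      refine ⟨hc, hcS, hr.trans (SimpleGraph.Adj.reachable ?_)⟩
      rw [SimpleGraph.induce_adj]
      exact hG ⟨b, hb⟩ ⟨c, hc⟩ hbc.1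
  obtain ⟨_, _, h⟩ := key y hr
  exact h

/-- Orientation determinant of three points. -/
def ori (p q r : ℝ × ℝ) : ℝ := (q.1 - p.1) * (r.2 - p.2) - (q.2 - p.2) * (r.1 - p.1)

def Ctri (a b c : ℝ × ℝ) : Set (ℝ × ℝ) := {x | 0 ≤ ori a b x ∧ 0 ≤ ori b c x ∧ 0 ≤ ori c a x}
def Otri (a b c : ℝ × ℝ) : Set (ℝ × ℝ) := {x | 0 < ori a b x ∧ 0 < ori b c x ∧ 0 < ori c a x}

theorem continuous_ori (a b : ℝ × ℝ) : Continuous (ori a b) := by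
  unfold ori; fun_prop

theorem isOpen_Otri (a b c : ℝ × ℝ) : IsOpen (Otri a b c) :=
  (isOpen_lt continuous_const (continuous_ori a b)).inter
    ((isOpen_lt continuous_const (continuous_ori b c)).inter
      (isOpen_lt continuous_const (continuous_ori c a)))

theorem isClosed_Ctri (a b c : ℝ × ℝ) : IsClosed (Ctri a b c) :=
  (isClosed_le continuous_const (continuous_ori a b)).inter
    ((isClosed_le continuous_const (continuous_ori b c)).inter
      (isClosed_le continuous_const (continuous_ori c a)))

theorem Otri_subset_Ctri (a b c : ℝ × ℝ) : Otri a b c ⊆ Ctri a b c :=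
  fun _ h => ⟨h.1.le, h.2.1.le, h.2.2.le⟩

theorem Otri_rot {a b c x : ℝ × ℝ} (h : x ∈ Otri a b c) : x ∈ Otri b c a := ⟨h.2.1, h.2.2, h.1⟩
theorem Ctri_rot {a b c x : ℝ × ℝ} (h : x ∈ Ctri a b c) : x ∈ Ctri b c a := ⟨h.2.1, h.2.2, h.1⟩

theorem ori_rot (a b c : ℝ × ℝ) : ori b c a = ori a b c := by unfold ori; ring
theorem ori_swap (a b c : ℝ × ℝ) : ori b a c = - ori a b c := by unfold ori; ring
theorem ori_aba (a b : ℝ × ℝ) : ori a b a = 0 := by unfold ori; ring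
theorem ori_abb (a b : ℝ × ℝ) : ori a b b = 0 := by unfold ori; ring
theorem ori_aab (a b : ℝ × ℝ) : ori a a b = 0 := by unfold ori; ring

theorem seg_param {c d x : ℝ × ℝ} (h : x ∈ segment ℝ c d) : ∃ s : ℝ, 0 ≤ s ∧ s ≤ 1 ∧
    x.1 = (1 - s) * c.1 + s * d.1 ∧ x.2 = (1 - s) * c.2 + s * d.2 := by
  obtain ⟨r, s, hr, hs, hrs, rfl⟩ := h
  refine ⟨s, hs, by linarith, ?_, ?_⟩
  · have : 1 - s = r := by linarith
    simp [this]
  · have : 1 - s = r := by linarith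
    simp [this]

theorem mem_seg_of {c d x : ℝ × ℝ} {s : ℝ} (h0 : 0 ≤ s) (h1 : s ≤ 1)
    (hx : x.1 = (1 - s) * c.1 + s * d.1) (hy : x.2 = (1 - s) * c.2 + s * d.2) : x ∈ segment ℝ c d := by
  refine ⟨1 - s, s, by linarith, h0, by ring, ?_⟩
  ext
  · simp [hx]
  · simp [hy]

theorem ori_aff {c d x : ℝ × ℝ} {s : ℝ} (a b : ℝ × ℝ)
    (hx : x.1 = (1 - s) * c.1 + s * d.1) (hy : x.2 = (1 - s) * c.2 + s * d.2) :
    ori a b x = (1 - s) * ori a b c + s * ori a b d := by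
  unfold ori; rw [hx, hy]; ring

theorem mem_side {a b c x : ℝ × ℝ} (h : 0 < ori a b c) (hx : x ∈ Ctri a b c) (h0 : ori a b x = 0) :
    x ∈ segment ℝ a b := by
  have hsum : ori a b x + ori b c x + ori c a x = ori a b c := by unfold ori; ring
  have e1 : ori a b c * (x.1 - a.1) = ori c a x * (b.1 - a.1) + ori a b x * (c.1 - a.1) := by
    unfold ori; ring
  have e2 : ori a b c * (x.2 - a.2) = ori c a x * (b.2 - a.2) + ori a b x * (c.2 - a.2) := by
    unfold ori; ring
  rw [h0] at e1 e2 hsum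
  have hs := hx.2.2
  have hs' := hx.2.1
  refine mem_seg_of (s := ori c a x / ori a b c) (div_nonneg hs h.le) ((div_le_one h).2 (by linarith)) ?_ ?_
  · field_simp; linarith
  · field_simp; linarith

theorem Ctri_sub {a b c x : ℝ × ℝ} (h : 0 < ori a b c) (hx : x ∈ Ctri a b c)
    (h1 : x ∉ segment ℝ a b) (h2 : x ∉ segment ℝ b c) (h3 : x ∉ segment ℝ c a) : x ∈ Otri a b c := by
  refine ⟨lt_of_le_of_ne hx.1 fun h0 => h1 (mem_side h hx h0.symm),
    lt_of_le_of_ne hx.2.1 fun h0 => h2 (mem_side (by rwa [ori_rot]) (Ctri_rot hx) h0.symm),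
    lt_of_le_of_ne hx.2.2 fun h0 => h3 (mem_side (by rwa [ori_rot, ori_rot])
      (Ctri_rot (Ctri_rot hx)) h0.symm)⟩

theorem trap {a b c : ℝ × ℝ} (h : 0 < ori a b c) {A : Set (ℝ × ℝ)} (hA : IsPreconnected A)
    (h1 : ∀ x ∈ A, x ∉ segment ℝ a b) (h2 : ∀ x ∈ A, x ∉ segment ℝ b c)
    (h3 : ∀ x ∈ A, x ∉ segment ℝ c a) {z : ℝ × ℝ} (hz : z ∈ A) (hzc : z ∈ Ctri a b c) :
    A ⊆ Otri a b c := by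
  refine hA.subset_left_of_subset_union (isOpen_Otri a b c) (isClosed_Ctri a b c).isOpen_compl ?_ ?_
    ⟨z, hz, Ctri_sub h hzc (h1 z hz) (h2 z hz) (h3 z hz)⟩
  · rw [Set.disjoint_left]
    intro x hx hx'
    exact hx' (Otri_subset_Ctri _ _ _ hx)
  · intro x hx
    by_cases hxc : x ∈ Ctri a b c
    · exact Or.inl (Ctri_sub h hxc (h1 x hx) (h2 x hx) (h3 x hx))
    · exact Or.inr hxc

/-- If `z` is in the triangle `abc`, it lies on the good side of every line that has `abc` on its
good side. -/
theorem ori_comb {a b c z : ℝ × ℝ} (d e : ℝ × ℝ) (h : 0 < ori a b c) (hz : z ∈ Ctri a b c)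
    (h1 : 0 ≤ ori d e a) (h2 : 0 ≤ ori d e b) (h3 : 0 ≤ ori d e c) : 0 ≤ ori d e z := by
  have key : ori a b c * ori d e z = ori b c z * ori d e a + ori c a z * ori d e b
      + ori a b z * ori d e c := by unfold ori; ring
  have : 0 ≤ ori a b c * ori d e z := by
    rw [key]
    have := mul_nonneg hz.2.1 h1
    have := mul_nonneg hz.2.2 h2
    have := mul_nonneg hz.1 h3
    linarith
  exact nonneg_of_mul_nonneg_right this h

theorem tri_corner_a {a b c : ℝ × ℝ} (h : 0 < ori a b c) : a ∈ Ctri a b c :=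
  ⟨(ori_aba a b).ge, by rw [ori_rot]; exact h.le, (ori_abb c a).ge⟩

theorem seg_in_Ctri {a b c x y z : ℝ × ℝ} (hx : x ∈ Ctri a b c) (hy : y ∈ Ctri a b c)
    (hz : z ∈ segment ℝ x y) : z ∈ Ctri a b c := by
  obtain ⟨s, h0, h1, e1, e2⟩ := seg_param hz
  have hs : 0 ≤ 1 - s := by linarith
  refine ⟨?_, ?_, ?_⟩
  · rw [ori_aff _ _ e1 e2]
    exact add_nonneg (mul_nonneg hs hx.1) (mul_nonneg h0 hy.1)
  · rw [ori_aff _ _ e1 e2]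
    exact add_nonneg (mul_nonneg hs hx.2.1) (mul_nonneg h0 hy.2.1)
  · rw [ori_aff _ _ e1 e2]
    exact add_nonneg (mul_nonneg hs hx.2.2) (mul_nonneg h0 hy.2.2)

/-- Quadrilateral: a point of `abc` or `acd` is in `abd` or `bcd`. -/
theorem quad_other {a b c d z : ℝ × ℝ} (h1 : 0 < ori a b c) (h2 : 0 < ori a c d) (h3 : 0 < ori a b d)
    (h4 : 0 < ori b c d) (hz : z ∈ Ctri a b c ∨ z ∈ Ctri a c d) : z ∈ Ctri a b d ∨ z ∈ Ctri b c d := by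
  have q1 : 0 ≤ ori a b z := by
    rcases hz with hz | hz
    · exact hz.1
    · exact ori_comb a b h2 hz (ori_aba a b).ge h1.le h3.le
  have q2 : 0 ≤ ori b c z := by
    rcases hz with hz | hz
    · exact hz.2.1
    · exact ori_comb b c h2 hz (by rw [ori_rot]; exact h1.le) (ori_abb b c).ge h4.le
  have q3 : 0 ≤ ori c d z := by
    rcases hz with hz | hz
    · exact ori_comb c d h1 hz (by rw [ori_rot]; exact h2.le) (by rw [ori_rot]; exact h4.le)
        (ori_aba c d).ge
    · exact hz.2.1
  have q4 : 0 ≤ ori d a z := by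
    rcases hz with hz | hz
    · exact ori_comb d a h1 hz (ori_abb d a).ge (by rw [ori_rot, ori_rot]; exact h3.le)
        (by rw [ori_rot, ori_rot]; exact h2.le)
    · exact hz.2.2
  rcases le_total 0 (ori b d z) with h | h
  · exact Or.inl ⟨q1, h, q4⟩
  · exact Or.inr ⟨q2, q3, by rw [ori_swap]; linarith⟩

/-- The straight-line drawing. -/
def slDrawing {V : Type} (G : SimpleGraph V) (p : V → ℝ × ℝ) (hp : Function.Injective p) : Drawing G where
  pos := p
  pos_inj := hp
  arc := fun u v _ => segment ℝ (p u) (p v)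
  arc_symm := fun u v _ => segment_symm ℝ (p v) (p u)
  arc_isArc := by
    intro u v h
    refine ⟨fun t => AffineMap.lineMap (p u) (p v) t, ?_, ?_, ?_, ?_, ?_⟩
    · exact (AffineMap.lineMap_continuous (R := ℝ)).continuousOn
    · exact (AffineMap.lineMap_injective ℝ (hp.ne h.ne)).injOn
    · simp
    · simp
    · exact segment_eq_image_lineMap ℝ (p u) (p v)

/-- A positively oriented triangle of edges, containing no other vertices. -/
structure GT {V : Type} (G : SimpleGraph V) (p : V → ℝ × ℝ) (a b c : V) : Prop where
  ab : G.Adj a b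
  bc : G.Adj b c
  ca : G.Adj c a
  pos : 0 < ori (p a) (p b) (p c)
  emp : ∀ w, p w ∈ Ctri (p a) (p b) (p c) → w = a ∨ w = b ∨ w = c

structure Geo {V : Type} (G : SimpleGraph V) (p : V → ℝ × ℝ) (TT : V → V → V → Prop)
    (QQ : V → V → V → V → Prop) (o₁ o₂ o₃ : V) : Prop where
  inj : Function.Injective p
  nc : ∀ u v w, G.Adj u v → w ≠ u → w ≠ v → ori (p u) (p v) (p w) ≠ 0
  cross : ∀ a b c d, G.Adj a b → G.Adj c d → a ≠ c → a ≠ d → b ≠ c → b ≠ d →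
    ori (p a) (p b) (p c) * ori (p a) (p b) (p d) < 0 →
    ori (p c) (p d) (p a) * ori (p c) (p d) (p b) < 0 →
    ∃ x y z w, QQ x y z w ∧ ((s(a, b) = s(x, z) ∧ s(c, d) = s(y, w)) ∨
      (s(a, b) = s(y, w) ∧ s(c, d) = s(x, z)))
  uniq : ∀ a b c d a' b' c' d', QQ a b c d → QQ a' b' c' d' →
    (s(a, c) = s(a', c') → s(b, d) = s(b', d')) ∧ (s(b, d) = s(b', d') → s(a, c) = s(a', c')) ∧
    s(a, c) ≠ s(b', d')
  tt : ∀ a b c, TT a b c → GT G p a b c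
  qq : ∀ a b c d, QQ a b c d → GT G p a b c ∧ GT G p a c d ∧ GT G p a b d ∧ GT G p b c d
  o12 : G.Adj o₁ o₂
  o23 : G.Adj o₂ o₃
  o31 : G.Adj o₃ o₁
  opos : 0 < ori (p o₁) (p o₂) (p o₃)
  oin : ∀ w, w ≠ o₁ → w ≠ o₂ → w ≠ o₃ → p w ∈ Otri (p o₁) (p o₂) (p o₃)
  cover : ∀ x ∈ Ctri (p o₁) (p o₂) (p o₃), (∃ a b c, TT a b c ∧ x ∈ Ctri (p a) (p b) (p c)) ∨
    ∃ a b c d, QQ a b c d ∧ (x ∈ Ctri (p a) (p b) (p c) ∨ x ∈ Ctri (p a) (p c) (p d))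
  tf : ∀ a b c a' b' c', (TT a b c ∨ (a = o₁ ∧ b = o₂ ∧ c = o₃)) →
    (TT a' b' c' ∨ (a' = o₁ ∧ b' = o₂ ∧ c' = o₃)) → ∀ x y u v, x ≠ y → u ≠ x → u ≠ y → v ≠ x → v ≠ y →
    (x = a ∨ x = b ∨ x = c) → (y = a ∨ y = b ∨ y = c) → (u = a ∨ u = b ∨ u = c) →
    (x = a' ∨ x = b' ∨ x = c') → (y = a' ∨ y = b' ∨ y = c') → (v = a' ∨ v = b' ∨ v = c') → u = v

namespace Geo

variable {V : Type} {G : SimpleGraph V} {p : V → ℝ × ℝ} {TT : V → V → V → Prop}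
  {QQ : V → V → V → V → Prop} {o₁ o₂ o₃ : V}

theorem meet_shared (h : Geo G p TT QQ o₁ o₂ o₃) {a b d : V} (hab : G.Adj a b) (had : G.Adj a d)
    (hbd : b ≠ d) {x : ℝ × ℝ} (h1 : x ∈ segment ℝ (p a) (p b)) (h2 : x ∈ segment ℝ (p a) (p d)) :
    x = p a := by
  obtain ⟨s, s0, s1, e1, e2⟩ := seg_param h1
  obtain ⟨t, t0, t1, f1, f2⟩ := seg_param h2
  have k1 := ori_aff (p a) (p d) e1 e2
  have k2 := ori_aff (p a) (p d) f1 f2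
  rw [ori_aba, ori_abb] at k2
  rw [ori_aba] at k1
  have hne := h.nc a d b had hab.ne.symm hbd
  have hs : s = 0 := by
    have : s * ori (p a) (p d) (p b) = 0 := by linarith
    exact (mul_eq_zero.1 this).resolve_right hne
  subst hs
  ext
  · simpa using e1
  · simpa using e2

theorem vert_on (h : Geo G p TT QQ o₁ o₂ o₃) {a b w : V} (hab : G.Adj a b)
    (hw : p w ∈ segment ℝ (p a) (p b)) : w = a ∨ w = b := by
  by_contra hcon
  rw [not_or] at hcon
  obtain ⟨s, s0, s1, e1, e2⟩ := seg_param hw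
  have k := ori_aff (p a) (p b) e1 e2
  rw [ori_aba, ori_abb] at k
  exact h.nc a b w hab hcon.1 hcon.2 (by linarith)

theorem sign_aux {A B s : ℝ} (hA : A ≠ 0) (hB : B ≠ 0) (h0 : 0 ≤ s) (h1 : s ≤ 1)
    (h : (1 - s) * A + s * B = 0) : A * B < 0 := by
  have hs0 : s ≠ 0 := by rintro rfl; simp at h; exact hA h
  have hs1 : s ≠ 1 := by rintro rfl; simp at h; exact hB h
  have hp : 0 < s := lt_of_le_of_ne h0 hs0.symm
  have hq : 0 < 1 - s := by
    have := lt_of_le_of_ne h1 hs1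
    linarith
  have hB' : s * B = -(1 - s) * A := by linarith
  have h2 : 0 < A * A := mul_self_pos.2 hA
  have : s * (A * B) < 0 := by
    have : s * (A * B) = -((1 - s) * (A * A)) := by
      calc s * (A * B) = A * (s * B) := by ring
        _ = _ := by rw [hB']; ring
    rw [this]
    have := mul_pos hq h2
    linarith
  by_contra hcon
  push Not at hcon
  have := mul_nonneg h0 hcon
  linarith

/-- Two edges meeting in an interior point are the diagonals of a quadrilateral. -/
theorem meet (h : Geo G p TT QQ o₁ o₂ o₃) {a b c d : V} (hab : G.Adj a b) (hcd : G.Adj c d)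
    (hne : s(a, b) ≠ s(c, d)) {x : ℝ × ℝ} (h1 : x ∈ segment ℝ (p a) (p b))
    (h2 : x ∈ segment ℝ (p c) (p d)) :
    (x = p a ∨ x = p b) ∨ (a ≠ c ∧ a ≠ d ∧ b ≠ c ∧ b ≠ d ∧
    ∃ x y z w, QQ x y z w ∧ ((s(a, b) = s(x, z) ∧ s(c, d) = s(y, w)) ∨
      (s(a, b) = s(y, w) ∧ s(c, d) = s(x, z)))) := by
  by_cases hac : a = c
  · subst hac
    exact Or.inl (Or.inl (h.meet_shared hab hcd (fun hh => hne (by rw [hh])) h1 h2))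
  by_cases had : a = d
  · subst had
    rw [segment_symm] at h2
    exact Or.inl (Or.inl (h.meet_shared hab hcd.symm (fun hh => hne (by rw [hh, Sym2.eq_swap])) h1 h2))
  by_cases hbc : b = c
  · subst hbc
    rw [segment_symm] at h1
    exact Or.inl (Or.inr (h.meet_shared hab.symm hcd (fun hh => hne (by rw [hh, Sym2.eq_swap])) h1 h2))
  by_cases hbd : b = d
  · subst hbd
    rw [segment_symm] at h1 h2
    exact Or.inl (Or.inr (h.meet_shared hab.symm hcd.symm (fun hh => hne (by rw [hh])) h1 h2))
  obtain ⟨s, s0, s1, e1, e2⟩ := seg_param h1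
  obtain ⟨t, t0, t1, f1, f2⟩ := seg_param h2
  have k1 := ori_aff (p a) (p b) e1 e2
  have k2 := ori_aff (p a) (p b) f1 f2
  have k3 := ori_aff (p c) (p d) e1 e2
  have k4 := ori_aff (p c) (p d) f1 f2
  rw [ori_aba, ori_abb] at k1 k4
  refine Or.inr ⟨hac, had, hbc, hbd, h.cross a b c d hab hcd hac had hbc hbd ?_ ?_⟩
  · exact sign_aux (h.nc a b c hab (Ne.symm hac) (Ne.symm hbc)) (h.nc a b d hab (Ne.symm had) (Ne.symm hbd)) t0 t1
      (by linarith)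
  · exact sign_aux (h.nc c d a hcd hac had) (h.nc c d b hcd hbc hbd) s0 s1 (by linarith)

/-- Two disjoint edges meet at most once. -/
theorem meet_once (h : Geo G p TT QQ o₁ o₂ o₃) {a b c d : V} (hab : G.Adj a b)
    (hca : c ≠ a) (hcb : c ≠ b) {x y : ℝ × ℝ} (h1 : x ∈ segment ℝ (p a) (p b))
    (h2 : x ∈ segment ℝ (p c) (p d)) (h3 : y ∈ segment ℝ (p a) (p b))
    (h4 : y ∈ segment ℝ (p c) (p d)) : x = y := by
  obtain ⟨s, -, -, e1, e2⟩ := seg_param h1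
  obtain ⟨t, -, -, f1, f2⟩ := seg_param h2
  obtain ⟨s', -, -, e1', e2'⟩ := seg_param h3
  obtain ⟨t', -, -, f1', f2'⟩ := seg_param h4
  have k1 := ori_aff (p a) (p b) e1 e2
  have k2 := ori_aff (p a) (p b) f1 f2
  have k3 := ori_aff (p a) (p b) e1' e2'
  have k4 := ori_aff (p a) (p b) f1' f2'
  rw [ori_aba, ori_abb] at k1 k3
  have hne := h.nc a b c hab hca hcb
  have h5 : (1 - t) * ori (p a) (p b) (p c) + t * ori (p a) (p b) (p d) = 0 := by linarith
  have h6 : (1 - t') * ori (p a) (p b) (p c) + t' * ori (p a) (p b) (p d) = 0 := by linarith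
  have h7 : (t - t') * ori (p a) (p b) (p c) = 0 := by linear_combination t * h6 - t' * h5
  have ht : t = t' := by
    have := (mul_eq_zero.1 h7).resolve_right hne
    linarith
  subst ht
  ext
  · rw [f1, f1']
  · rw [f2, f2']

theorem mem_arcInt (h : Geo G p TT QQ o₁ o₂ o₃) {a b : V} (hab : G.Adj a b) (x : ℝ × ℝ) :
    x ∈ (slDrawing G p h.inj).arcInt hab ↔ x ∈ segment ℝ (p a) (p b) ∧ x ≠ p a ∧ x ≠ p b := by
  simp only [Drawing.arcInt, slDrawing, Set.mem_sdiff, Set.mem_insert_iff, Set.mem_singleton_iff, not_or]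

theorem good (h : Geo G p TT QQ o₁ o₂ o₃) : (slDrawing G p h.inj).IsGood := by
  refine ⟨fun w u v huv hw => h.vert_on huv hw, ?_, ?_⟩
  · rintro e f hef x ⟨⟨a, b, hab, rfl, hx1⟩, ⟨c, d, hcd, rfl, hx2⟩⟩ y ⟨⟨a', b', hab', he, hy1⟩, ⟨c', d', hcd', hf, hy2⟩⟩
    rw [h.mem_arcInt] at hx1 hx2 hy1 hy2
    rcases h.meet hab hcd hef hx1.1 hx2.1 with hm | ⟨m1, m2, m3, m4, -⟩
    · rcases hm with hm | hm
      · exact absurd hm hx1.2.1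
      · exact absurd hm hx1.2.2
    · have hy1' : y ∈ segment ℝ (p a) (p b) := by
        rcases Sym2.eq_iff.1 he with ⟨rfl, rfl⟩ | ⟨rfl, rfl⟩
        · exact hy1.1
        · rw [segment_symm]; exact hy1.1
      have hy2' : y ∈ segment ℝ (p c) (p d) := by
        rcases Sym2.eq_iff.1 hf with ⟨rfl, rfl⟩ | ⟨rfl, rfl⟩
        · exact hy2.1
        · rw [segment_symm]; exact hy2.1
      exact h.meet_once hab m1.symm m3.symm hx1.1 hx2.1 hy1' hy2'
  · intro u v w h1 h2 hvw
    ext x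
    simp only [Set.mem_inter_iff, Set.mem_empty_iff_false, iff_false, not_and]
    rw [h.mem_arcInt, h.mem_arcInt]
    intro hx1 hx2
    exact hx1.2.1 (h.meet_shared h1 h2 hvw hx1.1 hx2.1)

theorem cross_diag (h : Geo G p TT QQ o₁ o₂ o₃) {e f : Sym2 V} (hc : (slDrawing G p h.inj).Cross e f) :
    ∃ x y z w, QQ x y z w ∧ ((e = s(x, z) ∧ f = s(y, w)) ∨ (e = s(y, w) ∧ f = s(x, z))) := by
  obtain ⟨hne, x, ⟨a, b, hab, rfl, hx1⟩, ⟨c, d, hcd, rfl, hx2⟩⟩ := hc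
  rw [h.mem_arcInt] at hx1 hx2
  rcases h.meet hab hcd hne hx1.1 hx2.1 with (hm | hm) | ⟨-, -, -, -, hq⟩
  · exact absurd hm hx1.2.1
  · exact absurd hm hx1.2.2
  · exact hq

theorem onePlanar (h : Geo G p TT QQ o₁ o₂ o₃) : (slDrawing G p h.inj).IsOnePlanar := by
  intro e f hf g hg
  obtain ⟨a, b, c, d, hq, h1⟩ := h.cross_diag hf
  obtain ⟨a', b', c', d', hq', h2⟩ := h.cross_diag hg
  have hu := h.uniq _ _ _ _ _ _ _ _ hq hq'
  have hu' := h.uniq _ _ _ _ _ _ _ _ hq' hq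
  rcases h1 with ⟨e1, f1⟩ | ⟨e1, f1⟩ <;> rcases h2 with ⟨e2, g2⟩ | ⟨e2, g2⟩
  · rw [f1, g2]; exact hu.1 (e1.symm.trans e2)
  · exact absurd (e1.symm.trans e2) hu.2.2
  · exact absurd (e2.symm.trans e1) hu'.2.2
  · rw [f1, g2]; exact hu.2.1 (e1.symm.trans e2)

/-- The edge `cd` is met by other edges at its ends only. -/
def Unc (G : SimpleGraph V) (p : V → ℝ × ℝ) (c d : V) : Prop :=
  ∀ a b, G.Adj a b → s(a, b) ≠ s(c, d) → ∀ x, x ∈ segment ℝ (p a) (p b) → x ∈ segment ℝ (p c) (p d) →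
    x = p c ∨ x = p d

theorem openSeg_facts (h : Geo G p TT QQ o₁ o₂ o₃) {c d : V} (hcd : G.Adj c d) (hu : Unc G p c d)
    {a b : V} (hab : G.Adj a b) (hne : s(a, b) ≠ s(c, d)) :
    ∀ x ∈ openSegment ℝ (p c) (p d), x ∉ segment ℝ (p a) (p b) := by
  intro x hx hx2
  have hcd' := h.inj.ne hcd.ne
  rcases hu a b hab hne x hx2 (openSegment_subset_segment _ _ _ hx) with rfl | rfl
  · exact hcd' (left_mem_openSegment_iff.1 hx)
  · exact hcd' (right_mem_openSegment_iff.1 hx)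

theorem uncrossed_side (h : Geo G p TT QQ o₁ o₂ o₃) {a b e c d : V} (hT : GT G p a b e)
    (hcd : G.Adj c d) (hu : Unc G p c d) {x : ℝ × ℝ} (hx : x ∈ openSegment ℝ (p c) (p d))
    (hxT : x ∈ Ctri (p a) (p b) (p e)) : (c = a ∨ c = b ∨ c = e) ∧ (d = a ∨ d = b ∨ d = e) := by
  by_cases e1 : s(a, b) = s(c, d)
  · rcases Sym2.eq_iff.1 e1 with ⟨rfl, rfl⟩ | ⟨rfl, rfl⟩ <;> simp
  by_cases e2 : s(b, e) = s(c, d)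
  · rcases Sym2.eq_iff.1 e2 with ⟨rfl, rfl⟩ | ⟨rfl, rfl⟩ <;> simp
  by_cases e3 : s(e, a) = s(c, d)
  · rcases Sym2.eq_iff.1 e3 with ⟨rfl, rfl⟩ | ⟨rfl, rfl⟩ <;> simp
  have hsub := trap hT.pos (convex_openSegment (𝕜 := ℝ) (p c) (p d)).isPreconnected
    (h.openSeg_facts hcd hu hT.ab e1) (h.openSeg_facts hcd hu hT.bc e2)
    (h.openSeg_facts hcd hu hT.ca e3) hx hxT
  have hcl : closure (openSegment ℝ (p c) (p d)) ⊆ Ctri (p a) (p b) (p e) :=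
    closure_minimal (hsub.trans (Otri_subset_Ctri _ _ _)) (isClosed_Ctri _ _ _)
  rw [closure_openSegment] at hcl
  exact ⟨hT.emp c (hcl (left_mem_segment _ _ _)), hT.emp d (hcl (right_mem_segment _ _ _))⟩

theorem outer_in (h : Geo G p TT QQ o₁ o₂ o₃) (w : V) : p w ∈ Ctri (p o₁) (p o₂) (p o₃) := by
  by_cases h1 : w = o₁
  · subst h1; exact tri_corner_a h.opos
  by_cases h2 : w = o₂
  · subst h2; exact Ctri_rot (Ctri_rot (tri_corner_a (by rw [ori_rot]; exact h.opos)))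
  by_cases h3 : w = o₃
  · subst h3; exact Ctri_rot (tri_corner_a (by rw [ori_rot, ori_rot]; exact h.opos))
  exact Otri_subset_Ctri _ _ _ (h.oin w h1 h2 h3)

theorem uncrossed_outer (h : Geo G p TT QQ o₁ o₂ o₃) {c d : V}
    (hcd : G.Adj c d) (hu : Unc G p c d) {x : ℝ × ℝ} (hx : x ∈ openSegment ℝ (p c) (p d))
    (hxT : x ∉ Otri (p o₁) (p o₂) (p o₃)) : (c = o₁ ∨ c = o₂ ∨ c = o₃) ∧ (d = o₁ ∨ d = o₂ ∨ d = o₃) := by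
  by_cases e1 : s(o₁, o₂) = s(c, d)
  · rcases Sym2.eq_iff.1 e1 with ⟨rfl, rfl⟩ | ⟨rfl, rfl⟩ <;> simp
  by_cases e2 : s(o₂, o₃) = s(c, d)
  · rcases Sym2.eq_iff.1 e2 with ⟨rfl, rfl⟩ | ⟨rfl, rfl⟩ <;> simp
  by_cases e3 : s(o₃, o₁) = s(c, d)
  · rcases Sym2.eq_iff.1 e3 with ⟨rfl, rfl⟩ | ⟨rfl, rfl⟩ <;> simp
  exfalso
  refine hxT (Ctri_sub h.opos (seg_in_Ctri (h.outer_in c) (h.outer_in d)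
    (openSegment_subset_segment _ _ _ hx)) (h.openSeg_facts hcd hu h.o12 e1 x hx)
    (h.openSeg_facts hcd hu h.o23 e2 x hx) (h.openSeg_facts hcd hu h.o31 e3 x hx))

end Geo

namespace Geo

variable {V : Type} {G : SimpleGraph V} {p : V → ℝ × ℝ} {TT : V → V → V → Prop}
  {QQ : V → V → V → V → Prop} {o₁ o₂ o₃ : V}

/-- A connected set avoiding the drawing lies in a triangular face, in a part of a quadrilateral, or
in the outer face. -/
theorem region (h : Geo G p TT QQ o₁ o₂ o₃) {A : Set (ℝ × ℝ)} (hA : IsPreconnected A) (hne : A.Nonempty)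
    (hd : ∀ x ∈ A, ∀ a b, G.Adj a b → x ∉ segment ℝ (p a) (p b)) :
    (∃ a b c, TT a b c ∧ A ⊆ Otri (p a) (p b) (p c)) ∨
    (∃ a b c a' b' c', GT G p a b c ∧ GT G p a' b' c' ∧ A ⊆ Otri (p a) (p b) (p c) ∧
      A ⊆ Otri (p a') (p b') (p c') ∧ ∃ y z, ∀ w, (w = a ∨ w = b ∨ w = c) →
        (w = a' ∨ w = b' ∨ w = c') → w = y ∨ w = z) ∨
    A ⊆ (Ctri (p o₁) (p o₂) (p o₃))ᶜ := by
  obtain ⟨z, hz⟩ := hne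
  have tr : ∀ a b c, GT G p a b c → z ∈ Ctri (p a) (p b) (p c) → A ⊆ Otri (p a) (p b) (p c) := by
    intro a b c hT hzT
    exact trap hT.pos hA (fun x hx => hd x hx _ _ hT.ab) (fun x hx => hd x hx _ _ hT.bc)
      (fun x hx => hd x hx _ _ hT.ca) hz hzT
  by_cases hzO : z ∈ Ctri (p o₁) (p o₂) (p o₃)
  · rcases h.cover z hzO with ⟨a, b, c, hT, hzT⟩ | ⟨a, b, c, d, hQ, hzQ⟩
    · exact Or.inl ⟨a, b, c, hT, tr a b c (h.tt a b c hT) hzT⟩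
    · right; left
      obtain ⟨t1, t2, t3, t4⟩ := h.qq a b c d hQ
      have hab := t1.ab.ne
      have hbc := t1.bc.ne
      have hca := t1.ca.ne
      have hcd := t2.bc.ne
      have hda := t2.ca.ne
      have hbd := t3.bc.ne
      rcases quad_other t1.pos t2.pos t3.pos t4.pos hzQ with h2 | h2 <;> rcases hzQ with h1 | h1
      · refine ⟨a, b, c, a, b, d, t1, t3, tr _ _ _ t1 h1, tr _ _ _ t3 h2, a, b, ?_⟩
        rintro w (rfl | rfl | rfl) (h | h | h)
        all_goals first
          | exact Or.inl rfl
          | exact Or.inr rfl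
          | exact Or.inl h
          | exact Or.inr h
          | exact absurd h hcd
      · refine ⟨a, c, d, a, b, d, t2, t3, tr _ _ _ t2 h1, tr _ _ _ t3 h2, a, d, ?_⟩
        rintro w (rfl | rfl | rfl) (h | h | h)
        all_goals first
          | exact Or.inl rfl
          | exact Or.inr rfl
          | exact Or.inl h
          | exact Or.inr h
          | exact absurd h hbc.symm
      · refine ⟨a, b, c, b, c, d, t1, t4, tr _ _ _ t1 h1, tr _ _ _ t4 h2, b, c, ?_⟩
        rintro w (rfl | rfl | rfl) (h | h | h)
        all_goals first
          | exact Or.inl rfl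
          | exact Or.inr rfl
          | exact Or.inl h
          | exact Or.inr h
          | exact absurd h hda.symm
      · refine ⟨a, c, d, b, c, d, t2, t4, tr _ _ _ t2 h1, tr _ _ _ t4 h2, c, d, ?_⟩
        rintro w (rfl | rfl | rfl) (h | h | h)
        all_goals first
          | exact Or.inl rfl
          | exact Or.inr rfl
          | exact Or.inl h
          | exact Or.inr h
          | exact absurd h hab
  · right; right
    intro x hx hxO
    refine hzO (Otri_subset_Ctri _ _ _ (trap h.opos hA (fun x hx => hd x hx _ _ h.o12)
      (fun x hx => hd x hx _ _ h.o23) (fun x hx => hd x hx _ _ h.o31) hx hxO hz))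

theorem cl_tri {a b c : V} {A : Set (ℝ × ℝ)} (hA : A ⊆ Otri (p a) (p b) (p c)) {x : ℝ × ℝ}
    (hx : x ∈ closure A) : x ∈ Ctri (p a) (p b) (p c) :=
  closure_minimal (hA.trans (Otri_subset_Ctri _ _ _)) (isClosed_Ctri _ _ _) hx

theorem cl_out {a b c : V} {A : Set (ℝ × ℝ)} (hA : A ⊆ (Ctri (p a) (p b) (p c))ᶜ) {x : ℝ × ℝ}
    (hx : x ∈ closure A) : x ∉ Otri (p a) (p b) (p c) := by
  have : closure A ⊆ (Otri (p a) (p b) (p c))ᶜ :=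
    closure_minimal (hA.trans (compl_subset_compl.2 (Otri_subset_Ctri _ _ _))) (isOpen_Otri _ _ _).isClosed_compl
  exact this hx

theorem out_vert (h : Geo G p TT QQ o₁ o₂ o₃) {w : V} (hw : p w ∉ Otri (p o₁) (p o₂) (p o₃)) :
    w = o₁ ∨ w = o₂ ∨ w = o₃ := by
  by_contra hcon
  rw [not_or, not_or] at hcon
  exact hw (h.oin w hcon.1 hcon.2.1 hcon.2.2)

theorem corners_adj {a b c u v : V} (ab : G.Adj a b) (bc : G.Adj b c) (ca : G.Adj c a) (huv : u ≠ v)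
    (hu : u = a ∨ u = b ∨ u = c) (hv : v = a ∨ v = b ∨ v = c) : G.Adj u v := by
  rcases hu with rfl | rfl | rfl <;> rcases hv with rfl | rfl | rfl <;>
    first
    | exact absurd rfl huv
    | assumption
    | (apply SimpleGraph.Adj.symm; assumption)

/-- A connected set avoiding the drawing joins only adjacent vertices. -/
theorem no_uncrossed (h : Geo G p TT QQ o₁ o₂ o₃) {A : Set (ℝ × ℝ)} (hA : IsPreconnected A)
    (hne : A.Nonempty) (hd : ∀ x ∈ A, ∀ a b, G.Adj a b → x ∉ segment ℝ (p a) (p b)) {u v : V}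
    (huv : u ≠ v) (hu : p u ∈ closure A) (hv : p v ∈ closure A) : G.Adj u v := by
  rcases h.region hA hne hd with ⟨a, b, c, hT, hsub⟩ | ⟨a, b, c, a', b', c', hT, -, hsub, -⟩ | hsub
  · have hT := h.tt a b c hT
    exact corners_adj hT.ab hT.bc hT.ca huv (hT.emp u (cl_tri hsub hu)) (hT.emp v (cl_tri hsub hv))
  · exact corners_adj hT.ab hT.bc hT.ca huv (hT.emp u (cl_tri hsub hu)) (hT.emp v (cl_tri hsub hv))
  · exact corners_adj h.o12 h.o23 h.o31 huv (h.out_vert (cl_out hsub hu)) (h.out_vert (cl_out hsub hv))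

/-- A connected set avoiding the drawing with a vertex and a point of an uncrossed edge in its
closure lies in a true face. -/
theorem true_face (h : Geo G p TT QQ o₁ o₂ o₃) {A : Set (ℝ × ℝ)} (hA : IsPreconnected A)
    (hne : A.Nonempty) (hd : ∀ x ∈ A, ∀ a b, G.Adj a b → x ∉ segment ℝ (p a) (p b)) {u c d : V}
    (hu : p u ∈ closure A) (hcd : G.Adj c d) (hunc : Unc G p c d) (huc : u ≠ c) (hud : u ≠ d)
    {x : ℝ × ℝ} (hx : x ∈ openSegment ℝ (p c) (p d)) (hxA : x ∈ closure A) :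
    ∃ a b e, (TT a b e ∨ (a = o₁ ∧ b = o₂ ∧ e = o₃)) ∧ (c = a ∨ c = b ∨ c = e) ∧
      (d = a ∨ d = b ∨ d = e) ∧ (u = a ∨ u = b ∨ u = e) := by
  rcases h.region hA hne hd with ⟨a, b, e, hT, hsub⟩ | ⟨a, b, e, a', b', e', hT, hT', hsub, hsub', y, z, hyz⟩ | hsub
  · have hT' := h.tt a b e hT
    have := h.uncrossed_side hT' hcd hunc hx (cl_tri hsub hxA)
    exact ⟨a, b, e, Or.inl hT, this.1, this.2, hT'.emp u (cl_tri hsub hu)⟩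
  · exfalso
    have h1 := h.uncrossed_side hT hcd hunc hx (cl_tri hsub hxA)
    have h2 := h.uncrossed_side hT' hcd hunc hx (cl_tri hsub' hxA)
    have k1 := hyz c h1.1 h2.1
    have k2 := hyz d h1.2 h2.2
    have k3 := hyz u (hT.emp u (cl_tri hsub hu)) (hT'.emp u (cl_tri hsub' hu))
    have hne := hcd.ne
    rcases k1 with rfl | rfl
    · rcases k2 with rfl | rfl
      · exact hne rfl
      · exact k3.elim huc hud
    · rcases k2 with rfl | rfl
      · exact k3.elim hud huc
      · exact hne rfl
  · have := h.uncrossed_outer hcd hunc hx (cl_out hsub hxA)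
    exact ⟨o₁, o₂, o₃, Or.inr ⟨rfl, rfl, rfl⟩, this.1, this.2, h.out_vert (cl_out hsub hu)⟩

theorem cl_image {γ : ℝ → ℝ × ℝ} (hc : ContinuousOn γ (Icc 0 1)) {s t : ℝ} (hs : 0 ≤ s) (ht : t ≤ 1)
    (hst : s < t) : IsPreconnected (γ '' Ioo s t) ∧ (γ '' Ioo s t).Nonempty ∧
    γ s ∈ closure (γ '' Ioo s t) ∧ γ t ∈ closure (γ '' Ioo s t) := by
  have hc' : ContinuousOn γ (Icc s t) := hc.mono (Icc_subset_Icc hs ht)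
  have hcl : closure (Ioo s t) = Icc s t := closure_Ioo hst.ne
  have hc'' : ContinuousOn γ (closure (Ioo s t)) := by rw [hcl]; exact hc'
  have himg := hc''.image_closure
  rw [hcl] at himg
  exact ⟨isPreconnected_Ioo.image _ (hc'.mono Ioo_subset_Icc_self), (nonempty_Ioo.2 hst).image _,
    himg ⟨s, ⟨le_rfl, hst.le⟩, rfl⟩, himg ⟨t, ⟨hst.le, le_rfl⟩, rfl⟩⟩

theorem no_new (h : Geo G p TT QQ o₁ o₂ o₃) {u v : V} (huv : u ≠ v) (hnadj : ¬ G.Adj u v)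
    {γ : ℝ → ℝ × ℝ} (hc : ContinuousOn γ (Icc 0 1)) (h0 : γ 0 = p u) (h1 : γ 1 = p v)
    (hV : ∀ t ∈ Ioo (0 : ℝ) 1, ∀ w, γ t ≠ p w)
    (hE : ∀ t ∈ Ioo (0 : ℝ) 1, ∀ c d, G.Adj c d → γ t ∈ segment ℝ (p c) (p d) →
      u ≠ c ∧ u ≠ d ∧ v ≠ c ∧ v ≠ d ∧ Unc G p c d ∧
      ∀ t' ∈ Ioo (0 : ℝ) 1, ∀ a b, G.Adj a b → γ t' ∈ segment ℝ (p a) (p b) → t' = t) : False := by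
  by_cases hex : ∃ t ∈ Ioo (0 : ℝ) 1, ∃ c d, G.Adj c d ∧ γ t ∈ segment ℝ (p c) (p d)
  · obtain ⟨t, ht, c, d, hcd, hx⟩ := hex
    obtain ⟨n1, n2, n3, n4, hunc, huni⟩ := hE t ht c d hcd hx
    have hxo : γ t ∈ openSegment ℝ (p c) (p d) :=
      mem_openSegment_of_ne_left_right (fun hh => hV t ht c hh.symm) (fun hh => hV t ht d hh.symm) hx
    obtain ⟨a1, a2, a3, a4⟩ := cl_image hc le_rfl ht.2.le ht.1
    obtain ⟨b1, b2, b3, b4⟩ := cl_image hc ht.1.le le_rfl ht.2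
    have d1 : ∀ x ∈ γ '' Ioo 0 t, ∀ a b, G.Adj a b → x ∉ segment ℝ (p a) (p b) := by
      rintro _ ⟨s, hs, rfl⟩ a b hab hmem
      exact hs.2.ne (huni s ⟨hs.1, hs.2.trans ht.2⟩ a b hab hmem)
    have d2 : ∀ x ∈ γ '' Ioo t 1, ∀ a b, G.Adj a b → x ∉ segment ℝ (p a) (p b) := by
      rintro _ ⟨s, hs, rfl⟩ a b hab hmem
      exact hs.1.ne' (huni s ⟨ht.1.trans hs.1, hs.2⟩ a b hab hmem)
    obtain ⟨a, b, e, hF, f1, f2, f3⟩ := h.true_face a1 a2 d1 (h0 ▸ a3) hcd hunc n1 n2 hxo a4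
    obtain ⟨a', b', e', hF', f1', f2', f3'⟩ := h.true_face b1 b2 d2 (h1 ▸ b4) hcd hunc n3 n4 hxo b3
    exact huv (h.tf a b e a' b' e' hF hF' c d u v hcd.ne n1 n2 n3 n4 f1 f2 f3 f1' f2' f3')
  · push Not at hex
    obtain ⟨a1, a2, a3, a4⟩ := cl_image hc le_rfl le_rfl one_pos
    refine hnadj (h.no_uncrossed a1 a2 ?_ huv (h0 ▸ a3) (h1 ▸ a4))
    rintro _ ⟨s, hs, rfl⟩ a b hab
    exact hex s hs a b hab

theorem maximal (h : Geo G p TT QQ o₁ o₂ o₃) : (slDrawing G p h.inj).IsMaximalOnePlane := by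
  refine ⟨h.good, h.onePlanar, ?_⟩
  rintro u v huv hnadj D' hpos harc ⟨⟨hg1, hg2, hg3⟩, hop⟩
  replace hpos : D'.pos = p := hpos
  have hnew : (G ⊔ SimpleGraph.fromEdgeSet {s(u, v)}).Adj u v := by
    rw [SimpleGraph.sup_adj]
    right
    simp [huv]
  have hold : ∀ {x y : V}, G.Adj x y → (G ⊔ SimpleGraph.fromEdgeSet {s(u, v)}).Adj x y :=
    fun {x y} hh => (SimpleGraph.sup_adj _ _ _ _).mpr (Or.inl hh)
  have harc' : ∀ {x y : V} (hh : G.Adj x y), D'.arc (hold hh) = segment ℝ (p x) (p y) :=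
    fun {x y} hh => harc hh
  obtain ⟨γ, hc, hinj, h0, h1, himg⟩ := D'.arc_isArc hnew
  rw [hpos] at h0 h1
  have m0 : (0 : ℝ) ∈ Icc (0 : ℝ) 1 := by simp
  have m1 : (1 : ℝ) ∈ Icc (0 : ℝ) 1 := by simp
  have hmem : ∀ t ∈ Ioo (0 : ℝ) 1, γ t ∈ D'.arc hnew := fun t ht => by
    rw [himg]; exact ⟨t, Ioo_subset_Icc_self ht, rfl⟩
  have hnu : ∀ t ∈ Ioo (0 : ℝ) 1, γ t ≠ p u := fun t ht hh =>
    ht.1.ne' (hinj (Ioo_subset_Icc_self ht) m0 (hh.trans h0.symm))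
  have hnv : ∀ t ∈ Ioo (0 : ℝ) 1, γ t ≠ p v := fun t ht hh =>
    ht.2.ne (hinj (Ioo_subset_Icc_self ht) m1 (hh.trans h1.symm))
  have hV : ∀ t ∈ Ioo (0 : ℝ) 1, ∀ w, γ t ≠ p w := by
    intro t ht w hw
    have : D'.pos w ∈ D'.arc hnew := by rw [hpos, ← hw]; exact hmem t ht
    rcases hg1 w hnew this with rfl | rfl
    · exact hnu t ht hw
    · exact hnv t ht hw
  have hIntv : ∀ t ∈ Ioo (0 : ℝ) 1, γ t ∈ D'.arcInt hnew := fun t ht =>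
    ⟨hmem t ht, by rw [hpos]; simp [hnu t ht, hnv t ht]⟩
  have hintE : ∀ {a b : V} (hab : G.Adj a b) (x : ℝ × ℝ), x ∈ segment ℝ (p a) (p b) → x ≠ p a → x ≠ p b →
      x ∈ D'.arcInt (hold hab) := by
    intro a b hab x hx hxa hxb
    refine ⟨by rw [harc' hab]; exact hx, by rw [hpos]; simp [hxa, hxb]⟩
  have hneE : ∀ {a b : V}, G.Adj a b → s(u, v) ≠ s(a, b) := by
    intro a b hab he
    have : s(u, v) ∈ G.edgeSet := he ▸ hab
    exact hnadj this
  have hcr : ∀ t ∈ Ioo (0 : ℝ) 1, ∀ c d, G.Adj c d → γ t ∈ segment ℝ (p c) (p d) → D'.Cross s(u, v) s(c, d) := by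
    intro t ht c d hcd hx
    exact ⟨hneE hcd, γ t, ⟨u, v, hnew, rfl, hIntv t ht⟩,
      ⟨c, d, hold hcd, rfl, hintE hcd _ hx (hV t ht c) (hV t ht d)⟩⟩
  have hnew' := hnew.symm
  have harcs : D'.arc hnew' = D'.arc hnew := D'.arc_symm hnew
  have hIntv' : ∀ t ∈ Ioo (0 : ℝ) 1, γ t ∈ D'.arcInt hnew' := fun t ht =>
    ⟨by rw [harcs]; exact hmem t ht, by rw [hpos]; simp [hnu t ht, hnv t ht]⟩
  have hshare : ∀ t ∈ Ioo (0 : ℝ) 1, ∀ c d, G.Adj c d → γ t ∈ segment ℝ (p c) (p d) → u ≠ c ∧ v ≠ c := by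
    intro t ht c d hcd hx
    have hxI := hintE hcd _ hx (hV t ht c) (hV t ht d)
    constructor
    · rintro rfl
      have := hg3 hnew (hold hcd) (fun hh => hneE hcd (by rw [hh]))
      have hmem' : γ t ∈ D'.arcInt hnew ∩ D'.arcInt (hold hcd) := ⟨hIntv t ht, hxI⟩
      rw [this] at hmem'
      exact hmem'
    · rintro rfl
      have := hg3 hnew' (hold hcd) (fun hh => hneE hcd (by rw [hh, Sym2.eq_swap]))
      have hmem' : γ t ∈ D'.arcInt hnew' ∩ D'.arcInt (hold hcd) := ⟨hIntv' t ht, hxI⟩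
      rw [this] at hmem'
      exact hmem'
  refine h.no_new huv hnadj hc h0 h1 hV ?_
  intro t ht c d hcd hx
  have hx' : γ t ∈ segment ℝ (p d) (p c) := by rw [segment_symm]; exact hx
  have s1 := hshare t ht c d hcd hx
  have s2 := hshare t ht d c hcd.symm hx'
  refine ⟨s1.1, s2.1, s1.2, s2.2, ?_, ?_⟩
  · intro a b hab hne x hxab hxcd
    by_contra hcon
    rw [not_or] at hcon
    have hxa : x ≠ p a := by
      rintro rfl
      rcases h.vert_on hcd hxcd with rfl | rfl
      · exact hcon.1 rfl
      · exact hcon.2 rfl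
    have hxb : x ≠ p b := by
      rintro rfl
      rcases h.vert_on hcd hxcd with rfl | rfl
      · exact hcon.1 rfl
      · exact hcon.2 rfl
    have hcross : D'.Cross s(c, d) s(a, b) :=
      ⟨hne.symm, x, ⟨c, d, hold hcd, rfl, hintE hcd x hxcd hcon.1 hcon.2⟩,
        ⟨a, b, hold hab, rfl, hintE hab x hxab hxa hxb⟩⟩
    have hcross2 : D'.Cross s(c, d) s(u, v) := (hcr t ht c d hcd hx).symm
    exact hneE hab (hop s(c, d) hcross2 hcross)
  · intro t' ht' a b hab hx2
    have c1 := hcr t ht c d hcd hx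
    have c2 := hcr t' ht' a b hab hx2
    have hee : s(c, d) = s(a, b) := hop s(u, v) c1 c2
    have hx2' : γ t' ∈ D'.edgeInt s(c, d) := by
      rw [hee]
      exact ⟨a, b, hold hab, rfl, hintE hab _ hx2 (hV t' ht' a) (hV t' ht' b)⟩
    have := hg2 s(u, v) s(c, d) (hneE hcd) ⟨⟨u, v, hnew, rfl, hIntv t' ht'⟩, hx2'⟩
      ⟨⟨u, v, hnew, rfl, hIntv t ht⟩, ⟨c, d, hold hcd, rfl, hintE hcd _ hx (hV t ht c) (hV t ht d)⟩⟩
    exact hinj (Ioo_subset_Icc_self ht') (Ioo_subset_Icc_self ht) this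

end Geo

/-- Combinatorial and geometric data of a straight-line drawing. -/
structure Dat where
  n : ℕ
  w : ℕ
  X : ℕ
  Y : ℕ
  H : ℕ
  A : ℕ
  TT : List (ℕ × ℕ × ℕ)
  QQ : List (ℕ × ℕ × ℕ × ℕ)
  EL : List (ℕ × ℕ)
  o₁ : ℕ
  o₂ : ℕ
  o₃ : ℕ
  CC : List (ℕ × ℕ × ℕ)

def allBelow (f : ℕ → Bool) : ℕ → Bool
  | 0 => true
  | k + 1 => f k && allBelow f k

theorem allBelow_spec {f : ℕ → Bool} {n : ℕ} (h : allBelow f n = true) : ∀ k < n, f k = true := by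
  induction n with
  | zero => intro k hk; omega
  | succ n ih =>
    simp only [allBelow, Bool.and_eq_true] at h
    intro k hk
    rcases Nat.lt_succ_iff_lt_or_eq.1 hk with hk | rfl
    · exact ih h.2 k hk
    · exact h.1

/-- Equality of unordered pairs. -/
def sameB (a b c d : ℕ) : Bool := (Nat.beq a c && Nat.beq b d) || (Nat.beq a d && Nat.beq b c)

theorem sameB_iff {a b c d : ℕ} : sameB a b c d = true ↔ (a = c ∧ b = d) ∨ (a = d ∧ b = c) := by
  simp [sameB]

theorem sameB_fin {n : ℕ} {a b c d : Fin n} : sameB a b c d = true ↔ s(a, b) = s(c, d) := by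
  rw [sameB_iff, Sym2.eq_iff]
  simp only [Fin.ext_iff]

namespace Dat

variable (D : Dat)

def lk (X i : ℕ) : ℕ := Nat.mod (Nat.shiftRight X (Nat.mul D.w i)) (Nat.pow 2 D.w)

def adjb (a b : ℕ) : Bool :=
  Nat.blt a D.n && (Nat.blt b D.n && Nat.testBit D.A (Nat.add (Nat.mul D.n a) b))

def dpos (ax ay bx bv cx cy : ℕ) : ℕ :=
  Nat.add (Nat.add (Nat.mul ax bv) (Nat.mul bx cy)) (Nat.mul cx ay)

def pp (a b c : ℕ) : ℕ :=
  dpos (D.lk D.X a) (D.lk D.Y a) (D.lk D.X b) (D.lk D.Y b) (D.lk D.X c) (D.lk D.Y c)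

def pn (a b c : ℕ) : ℕ :=
  dpos (D.lk D.Y a) (D.lk D.X a) (D.lk D.Y b) (D.lk D.X b) (D.lk D.Y c) (D.lk D.X c)

/-- Counterclockwise test. -/
def P (a b c : ℕ) : Bool := Nat.blt (D.pn a b c) (D.pp a b c)

noncomputable def pt (i : ℕ) : ℝ × ℝ := ((D.lk D.X i : ℝ), (D.lk D.Y i : ℝ))

theorem ori_eq (a b c : ℕ) : ori (D.pt a) (D.pt b) (D.pt c) = (D.pp a b c : ℝ) - (D.pn a b c : ℝ) := by
  have h1 : D.pp a b c = D.lk D.X a * D.lk D.Y b + D.lk D.X b * D.lk D.Y c + D.lk D.X c * D.lk D.Y a := rfl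
  have h2 : D.pn a b c = D.lk D.Y a * D.lk D.X b + D.lk D.Y b * D.lk D.X c + D.lk D.Y c * D.lk D.X a := rfl
  rw [h1, h2]
  simp only [ori, pt]
  push_cast
  ring

theorem P_iff {a b c : ℕ} : D.P a b c = true ↔ 0 < ori (D.pt a) (D.pt b) (D.pt c) := by
  rw [ori_eq, sub_pos, Nat.cast_lt, P, Nat.blt_eq]

/-- The lifting inequality. -/
def liftB (a b c d : ℕ) : Bool :=
  Nat.blt
    (D.lk D.H a * D.pn c b d + D.lk D.H c * D.pp b d a + D.lk D.H b * D.pp d c a + D.lk D.H d * D.pp c b a)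
    (D.lk D.H a * D.pp c b d + D.lk D.H c * D.pn b d a + D.lk D.H b * D.pn d c a + D.lk D.H d * D.pn c b a)

theorem liftB_spec {a b c d : ℕ} (h : D.liftB a b c d = true) :
    (D.lk D.H c : ℝ) * ori (D.pt b) (D.pt d) (D.pt a) + (D.lk D.H b : ℝ) * ori (D.pt d) (D.pt c) (D.pt a)
      + (D.lk D.H d : ℝ) * ori (D.pt c) (D.pt b) (D.pt a)
      < (D.lk D.H a : ℝ) * ori (D.pt c) (D.pt b) (D.pt d) := by
  rw [liftB, Nat.blt_eq] at h
  have h' : ((D.lk D.H a * D.pn c b d + D.lk D.H c * D.pp b d a + D.lk D.H b * D.pp d c a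
      + D.lk D.H d * D.pp c b a : ℕ) : ℝ) <
    ((D.lk D.H a * D.pp c b d + D.lk D.H c * D.pn b d a + D.lk D.H b * D.pn d c a
      + D.lk D.H d * D.pn c b a : ℕ) : ℝ) := by exact_mod_cast h
  push_cast at h'
  simp only [ori_eq]
  linarith

/-- Checker for a geometric empty triangle. -/
def gtB (a b c : ℕ) : Bool :=
  D.adjb a b && (D.adjb b c && (D.adjb c a && (D.P a b c &&
    allBelow (fun w => Nat.beq w a || (Nat.beq w b || (Nat.beq w c ||
      (D.P b a w || (D.P c b w || D.P a c w))))) D.n)))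

def cells : List (ℕ × ℕ × ℕ) :=
  D.TT ++ D.QQ.flatMap (fun q => [(q.1, q.2.1, q.2.2.1), (q.1, q.2.2.1, q.2.2.2)])

def sideB (a b c : ℕ) : Bool :=
  (Nat.beq b D.o₁ && Nat.beq c D.o₂) || ((Nat.beq b D.o₂ && Nat.beq c D.o₃) ||
  ((Nat.beq b D.o₃ && Nat.beq c D.o₁) ||
  D.cells.any (fun t =>
    (Nat.beq t.1 c && (Nat.beq t.2.1 b && D.liftB a b c t.2.2)) ||
    ((Nat.beq t.2.1 c && (Nat.beq t.2.2 b && D.liftB a b c t.1)) ||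
    (Nat.beq t.2.2 c && (Nat.beq t.1 b && D.liftB a b c t.2.1))))))

def mem3 (x : ℕ) (t : ℕ × ℕ × ℕ) : Bool := Nat.beq x t.1 || (Nat.beq x t.2.1 || Nat.beq x t.2.2)

def chkAdj : Bool :=
  allBelow (fun a => !(D.adjb a a) && allBelow (fun b => !(D.adjb a b) || D.adjb b a) D.n) D.n

def chkInj : Bool :=
  allBelow (fun a => allBelow (fun b => Nat.beq a b || !(Nat.beq (D.lk D.X a) (D.lk D.X b)) ||
    !(Nat.beq (D.lk D.Y a) (D.lk D.Y b))) D.n) D.n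

def chkEL : Bool :=
  D.EL.all (fun e => D.adjb e.1 e.2 && Nat.blt e.1 e.2) &&
  (nodupB (D.EL.map (fun e => Nat.add (Nat.mul e.1 64) e.2)) &&
  allBelow (fun a => allBelow (fun b => !(D.adjb a b) || (!(Nat.blt a b) ||
    D.EL.any (fun e => Nat.beq e.1 a && Nat.beq e.2 b))) D.n) D.n)

def chkNc : Bool :=
  D.EL.all (fun e => allBelow (fun w => Nat.beq w e.1 || (Nat.beq w e.2 ||
    (D.P e.1 e.2 w || D.P e.2 e.1 w))) D.n)

def oneSide (a b c d : ℕ) : Bool := (D.P a b c && D.P a b d) || (D.P b a c && D.P b a d)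

def diagB (a b c d : ℕ) : Bool :=
  D.QQ.any (fun q => (sameB a b q.1 q.2.2.1 && sameB c d q.2.1 q.2.2.2) ||
    (sameB a b q.2.1 q.2.2.2 && sameB c d q.1 q.2.2.1))

def chkCross : Bool :=
  D.EL.all (fun e => D.EL.all (fun f =>
    Nat.beq e.1 f.1 || (Nat.beq e.1 f.2 || (Nat.beq e.2 f.1 || (Nat.beq e.2 f.2 ||
    (D.oneSide e.1 e.2 f.1 f.2 || (D.oneSide f.1 f.2 e.1 e.2 || D.diagB e.1 e.2 f.1 f.2)))))))

def chkUniq : Bool :=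
  D.QQ.all (fun q => D.QQ.all (fun r =>
    (!(sameB q.1 q.2.2.1 r.1 r.2.2.1) || sameB q.2.1 q.2.2.2 r.2.1 r.2.2.2) &&
    ((!(sameB q.2.1 q.2.2.2 r.2.1 r.2.2.2) || sameB q.1 q.2.2.1 r.1 r.2.2.1) &&
    !(sameB q.1 q.2.2.1 r.2.1 r.2.2.2))))

def chkGT : Bool :=
  D.TT.all (fun t => D.gtB t.1 t.2.1 t.2.2) &&
  D.QQ.all (fun q => D.gtB q.1 q.2.1 q.2.2.1 && (D.gtB q.1 q.2.2.1 q.2.2.2 &&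
    (D.gtB q.1 q.2.1 q.2.2.2 && D.gtB q.2.1 q.2.2.1 q.2.2.2)))

def chkOut : Bool :=
  D.adjb D.o₁ D.o₂ && (D.adjb D.o₂ D.o₃ && (D.adjb D.o₃ D.o₁ && (D.P D.o₁ D.o₂ D.o₃ &&
    allBelow (fun w => Nat.beq w D.o₁ || (Nat.beq w D.o₂ || (Nat.beq w D.o₃ ||
      (D.P D.o₁ D.o₂ w && (D.P D.o₂ D.o₃ w && D.P D.o₃ D.o₁ w))))) D.n)))

def chkCover : Bool :=
  !(D.cells.isEmpty) &&
  D.cells.all (fun t => D.sideB t.1 t.2.1 t.2.2 && (D.sideB t.2.1 t.2.2 t.1 && D.sideB t.2.2 t.1 t.2.1))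

def faces : List (ℕ × ℕ × ℕ) := (D.o₁, D.o₂, D.o₃) :: D.TT

def chkTf : Bool :=
  D.faces.all (fun t => D.faces.all (fun r =>
    (Nat.beq t.1 r.1 && (Nat.beq t.2.1 r.2.1 && Nat.beq t.2.2 r.2.2)) ||
    (!(mem3 t.1 r && mem3 t.2.1 r) && (!(mem3 t.2.1 r && mem3 t.2.2 r) && !(mem3 t.2.2 r && mem3 t.1 r)))))

/-! Connectivity certificates. -/

def dec : ℕ → ℕ → List ℕ → List (List ℕ)
  | 0, _, cur => [cur]
  | k + 1, N, cur =>
    match N with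
    | 0 => [cur]
    | m + 1 =>
      match Nat.mod (Nat.succ m) 64 with
      | 0 => cur :: dec k (Nat.div (Nat.succ m) 64) []
      | v + 1 => dec k (Nat.div (Nat.succ m) 64) (v :: cur)

def certB (c : ℕ × ℕ × ℕ) : Bool :=
  let ps := dec 100 c.2.2 []
  Nat.beq ps.length 7 && (nodupB ps.flatten && ps.all (fun L => chainB D.adjb c.2.1 L c.1))

def chkConn : Bool :=
  D.CC.all (fun c => D.certB c) &&
  (allBelow (fun x => Nat.beq x 0 || !(allBelow (fun y => !(D.adjb x y)) x)) D.n &&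
  allBelow (fun x => allBelow (fun y => D.adjb x y ||
    (Nat.beq (Nat.mod (Nat.land (Nat.shiftRight D.A (Nat.mul D.n x)) (Nat.shiftRight D.A (Nat.mul D.n y)))
      (Nat.pow 2 D.n)) 0 ||
    D.CC.any (fun c => Nat.beq c.1 x && Nat.beq c.2.1 y))) x) D.n)

end Dat

theorem lift_real {a b c d x : ℝ × ℝ} {ha hb hc hd : ℝ} (hT : 0 < ori a b c) (hT' : 0 < ori c b d)
    (hl : hc * ori b d a + hb * ori d c a + hd * ori c b a < ha * ori c b d) (hx : ori b c x < 0) :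
    (ha * ori b c x + hb * ori c a x + hc * ori a b x) / ori a b c <
    (hc * ori b d x + hb * ori d c x + hd * ori c b x) / ori c b d := by
  rw [div_lt_div_iff₀ hT hT']
  have key : (hc * ori b d x + hb * ori d c x + hd * ori c b x) * ori a b c -
      (ha * ori b c x + hb * ori c a x + hc * ori a b x) * ori c b d =
      ori b c x * (hc * ori b d a + hb * ori d c a + hd * ori c b a - ha * ori c b d) := by
    unfold ori; ring
  have := mul_pos_of_neg_of_neg hx (sub_neg.2 hl)
  linarith

namespace Dat

variable (D : Dat)

noncomputable def ell (x : ℝ × ℝ) (t : ℕ × ℕ × ℕ) : ℝ :=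
  ((D.lk D.H t.1 : ℝ) * ori (D.pt t.2.1) (D.pt t.2.2) x + (D.lk D.H t.2.1 : ℝ) * ori (D.pt t.2.2) (D.pt t.1) x
    + (D.lk D.H t.2.2 : ℝ) * ori (D.pt t.1) (D.pt t.2.1) x) / ori (D.pt t.1) (D.pt t.2.1) (D.pt t.2.2)

theorem ell_rot (x : ℝ × ℝ) (a b c : ℕ) : D.ell x (b, c, a) = D.ell x (a, b, c) := by
  simp only [ell]
  rw [ori_rot (D.pt a)]
  congr 1
  ring

theorem adjb_lt {a b : ℕ} (h : D.adjb a b = true) : a < D.n ∧ b < D.n := by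
  simp only [adjb, Bool.and_eq_true, Nat.blt_eq] at h
  exact ⟨h.1, h.2.1⟩

variable {D}

theorem gtB_pos {a b c : ℕ} (h : D.gtB a b c = true) : 0 < ori (D.pt a) (D.pt b) (D.pt c) := by
  simp only [gtB, Bool.and_eq_true] at h
  exact D.P_iff.1 h.2.2.2.1

theorem cells_pos (hg : D.chkGT = true) {t : ℕ × ℕ × ℕ} (ht : t ∈ D.cells) :
    0 < ori (D.pt t.1) (D.pt t.2.1) (D.pt t.2.2) := by
  simp only [chkGT, Bool.and_eq_true, List.all_eq_true] at hg
  simp only [cells, List.mem_append, List.mem_flatMap, List.mem_cons, List.not_mem_nil, or_false] at ht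
  rcases ht with ht | ⟨q, hq, rfl | rfl⟩
  · exact gtB_pos (hg.1 _ ht)
  · exact gtB_pos (hg.2 _ hq).1
  · exact gtB_pos (hg.2 _ hq).2.1

theorem side_ok (hg : D.chkGT = true) {x : ℝ × ℝ}
    (hx : x ∈ Ctri (D.pt D.o₁) (D.pt D.o₂) (D.pt D.o₃)) {a b c : ℕ}
    (hp : 0 < ori (D.pt a) (D.pt b) (D.pt c)) (hs : D.sideB a b c = true)
    (hmax : ∀ t ∈ D.cells, D.ell x t ≤ D.ell x (a, b, c)) : 0 ≤ ori (D.pt b) (D.pt c) x := by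
  by_contra hneg
  rw [not_le] at hneg
  simp only [sideB, Bool.or_eq_true, Bool.and_eq_true, Nat.beq_eq, List.any_eq_true] at hs
  have main : ∀ d, D.liftB a b c d = true → 0 < ori (D.pt c) (D.pt b) (D.pt d) →
      D.ell x (a, b, c) < D.ell x (c, b, d) := by
    intro d hd hpos
    exact lift_real hp hpos (D.liftB_spec hd) hneg
  rcases hs with ⟨rfl, rfl⟩ | ⟨rfl, rfl⟩ | ⟨rfl, rfl⟩ | ⟨⟨t1, t2, t3⟩, ht, hs⟩
  · exact absurd hx.1 (not_le.2 hneg)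
  · exact absurd hx.2.1 (not_le.2 hneg)
  · exact absurd hx.2.2 (not_le.2 hneg)
  · have hpos := cells_pos hg ht
    have hm := hmax _ ht
    simp only at hs hpos
    rcases hs with ⟨rfl, rfl, hl⟩ | ⟨rfl, rfl, hl⟩ | ⟨rfl, rfl, hl⟩
    · exact absurd (main _ hl hpos) (not_lt.2 hm)
    · have h2 := main _ hl (by rw [ori_rot]; exact hpos)
      rw [← D.ell_rot x t1 t2 t3] at hm
      exact absurd h2 (not_lt.2 hm)
    · have h2 := main _ hl (by rw [← ori_rot]; exact hpos)
      rw [D.ell_rot x t3 t1 t2] at hm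
      exact absurd h2 (not_lt.2 hm)

theorem cover (hg : D.chkGT = true) (hc : D.chkCover = true) {x : ℝ × ℝ}
    (hx : x ∈ Ctri (D.pt D.o₁) (D.pt D.o₂) (D.pt D.o₃)) :
    ∃ t ∈ D.cells, x ∈ Ctri (D.pt t.1) (D.pt t.2.1) (D.pt t.2.2) := by
  simp only [chkCover, Bool.and_eq_true, List.all_eq_true] at hc
  obtain ⟨hne, hall⟩ := hc
  have hne' : D.cells.toFinset.Nonempty := by
    rw [List.toFinset_nonempty_iff]
    intro h0
    simp [h0] at hne
  obtain ⟨t, ht, hmax⟩ := D.cells.toFinset.exists_max_image (D.ell x) hne'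
  simp only [List.mem_toFinset] at ht hmax
  have hpos := cells_pos hg ht
  have hh := hall t ht
  refine ⟨t, ht, ?_⟩
  clear hall ht hne hne'
  obtain ⟨a, b, c⟩ := t
  simp only at hpos hh ⊢
  obtain ⟨h1, h2, h3⟩ := hh
  refine ⟨?_, ?_, ?_⟩
  · exact side_ok (a := c) (b := a) (c := b) hg hx (by rw [← ori_rot]; exact hpos) h3
      (fun t ht => (hmax t ht).trans_eq (D.ell_rot x c a b))
  · exact side_ok (a := a) (b := b) (c := c) hg hx hpos h1 hmax
  · exact side_ok (a := b) (b := c) (c := a) hg hx (by rw [ori_rot]; exact hpos) h2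
      (fun t ht => (hmax t ht).trans_eq (D.ell_rot x a b c).symm)

/-- All checks. -/
structure OK (D : Dat) : Prop where
  adj : D.chkAdj = true
  inj : D.chkInj = true
  el : D.chkEL = true
  nc : D.chkNc = true
  cross : D.chkCross = true
  uniq : D.chkUniq = true
  gt : D.chkGT = true
  out : D.chkOut = true
  cov : D.chkCover = true
  tf : D.chkTf = true
  conn : D.chkConn = true

theorem adjb_symm (h : D.chkAdj = true) {a b : ℕ} (hab : D.adjb a b = true) : D.adjb b a = true := by
  have := allBelow_spec h a (D.adjb_lt hab).1
  simp only [Bool.and_eq_true] at this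
  have := allBelow_spec this.2 b (D.adjb_lt hab).2
  simpa [hab] using this

theorem adjb_irrefl (h : D.chkAdj = true) (a : ℕ) : D.adjb a a ≠ true := by
  intro hab
  have := allBelow_spec h a (D.adjb_lt hab).1
  simp [hab] at this

def gr (h : OK D) : SimpleGraph (Fin D.n) where
  Adj a b := D.adjb a b = true
  symm := ⟨fun _ _ hab => adjb_symm h.adj hab⟩
  loopless := ⟨fun a => adjb_irrefl h.adj a⟩

noncomputable def ptF (D : Dat) (i : Fin D.n) : ℝ × ℝ := D.pt i

theorem gtB_GT (h : OK D) {a b c : Fin D.n} (hg : D.gtB a b c = true) : GT (gr h) D.ptF a b c := by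
  have hp := gtB_pos hg
  simp only [gtB, Bool.and_eq_true] at hg
  obtain ⟨h1, h2, h3, -, h5⟩ := hg
  refine ⟨h1, h2, h3, hp, ?_⟩
  intro w hw
  have := allBelow_spec h5 w w.2
  simp only [Bool.or_eq_true, Nat.beq_eq, P_iff] at this
  rcases this with e | e | e | e | e | e
  · exact Or.inl (Fin.ext e)
  · exact Or.inr (Or.inl (Fin.ext e))
  · exact Or.inr (Or.inr (Fin.ext e))
  · rw [ori_swap] at e
    have := hw.1
    simp only [ptF] at this
    linarith
  · rw [ori_swap] at e
    have := hw.2.1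
    simp only [ptF] at this
    linarith
  · rw [ori_swap] at e
    have := hw.2.2
    simp only [ptF] at this
    linarith

theorem EL_mem (h : OK D) {a b : ℕ} (hab : D.adjb a b = true) : (a, b) ∈ D.EL ∨ (b, a) ∈ D.EL := by
  have key : ∀ a b, D.adjb a b = true → a < b → (a, b) ∈ D.EL := by
    intro a b hab hlt
    have h1 := h.el
    simp only [chkEL, Bool.and_eq_true] at h1
    have h2 := allBelow_spec (allBelow_spec h1.2.2 a (D.adjb_lt hab).1) b (D.adjb_lt hab).2
    have h3 : Nat.blt a b = true := by rw [Nat.blt_eq]; exact hlt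
    simp only [hab, h3, Bool.not_true, Bool.false_or, List.any_eq_true, Bool.and_eq_true, Nat.beq_eq] at h2
    obtain ⟨⟨e1, e2⟩, he, h4, h5⟩ := h2
    simp only at h4 h5
    rw [← h4, ← h5]
    exact he
  rcases lt_trichotomy a b with hlt | rfl | hlt
  · exact Or.inl (key _ _ hab hlt)
  · exact absurd hab (adjb_irrefl h.adj a)
  · exact Or.inr (key _ _ (adjb_symm h.adj hab) hlt)

theorem oneSide_spec {a b c d : ℕ} (h : D.oneSide a b c d = true) :
    0 < ori (D.pt a) (D.pt b) (D.pt c) * ori (D.pt a) (D.pt b) (D.pt d) := by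
  simp only [oneSide, Bool.or_eq_true, Bool.and_eq_true, P_iff] at h
  rcases h with h | h
  · exact mul_pos h.1 h.2
  · rw [ori_swap, ori_swap _ _ (D.pt d)] at h
    exact mul_pos_of_neg_of_neg (by linarith) (by linarith)

theorem cross_aux (h : OK D) {a b c d : ℕ} (he : (a, b) ∈ D.EL) (hf : (c, d) ∈ D.EL)
    (h1 : a ≠ c) (h2 : a ≠ d) (h3 : b ≠ c) (h4 : b ≠ d)
    (h5 : ori (D.pt a) (D.pt b) (D.pt c) * ori (D.pt a) (D.pt b) (D.pt d) < 0)
    (h6 : ori (D.pt c) (D.pt d) (D.pt a) * ori (D.pt c) (D.pt d) (D.pt b) < 0) :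
    D.diagB a b c d = true := by
  have hc := h.cross
  simp only [chkCross, List.all_eq_true] at hc
  have := hc _ he _ hf
  simp only [Bool.or_eq_true, Nat.beq_eq] at this
  rcases this with e | e | e | e | e | e | e
  · exact absurd e h1
  · exact absurd e h2
  · exact absurd e h3
  · exact absurd e h4
  · exact absurd (oneSide_spec e) (by linarith)
  · exact absurd (oneSide_spec e) (by linarith)
  · exact e

theorem ori_swap_mul (a b c d : ℝ × ℝ) : ori b a c * ori b a d = ori a b c * ori a b d := by
  rw [ori_swap, ori_swap _ _ d]; ring

theorem sameB_comm (a b c d : ℕ) : sameB b a c d = sameB a b c d := by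
  rw [Bool.eq_iff_iff, sameB_iff, sameB_iff]
  tauto

theorem diagB_comm (a b c d : ℕ) : D.diagB b a c d = D.diagB a b c d := by
  simp only [diagB, sameB_comm]

theorem diagB_comm' (a b c d : ℕ) : D.diagB a b d c = D.diagB a b c d := by
  simp only [diagB, sameB_comm]

theorem cross_diagB (h : OK D) {a b c d : ℕ} (he : D.adjb a b = true) (hf : D.adjb c d = true)
    (h1 : a ≠ c) (h2 : a ≠ d) (h3 : b ≠ c) (h4 : b ≠ d)
    (h5 : ori (D.pt a) (D.pt b) (D.pt c) * ori (D.pt a) (D.pt b) (D.pt d) < 0)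
    (h6 : ori (D.pt c) (D.pt d) (D.pt a) * ori (D.pt c) (D.pt d) (D.pt b) < 0) :
    D.diagB a b c d = true := by
  rcases EL_mem h he with he | he <;> rcases EL_mem h hf with hf | hf
  · exact cross_aux h he hf h1 h2 h3 h4 h5 h6
  · rw [← diagB_comm']
    exact cross_aux h he hf h2 h1 h4 h3 (by linarith) (by rw [ori_swap_mul]; exact h6)
  · rw [← diagB_comm]
    exact cross_aux h he hf h3 h4 h1 h2 (by rw [ori_swap_mul]; exact h5) (by linarith)
  · rw [← diagB_comm', ← diagB_comm]
    exact cross_aux h he hf h4 h3 h2 h1 (by rw [ori_swap_mul]; linarith) (by rw [ori_swap_mul]; linarith)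

theorem gtB_lt {a b c : ℕ} (h : D.gtB a b c = true) : a < D.n ∧ b < D.n ∧ c < D.n := by
  simp only [gtB, Bool.and_eq_true] at h
  exact ⟨(D.adjb_lt h.1).1, (D.adjb_lt h.1).2, (D.adjb_lt h.2.1).2⟩

theorem TT_gtB (h : OK D) {a b c : ℕ} (ht : (a, b, c) ∈ D.TT) : D.gtB a b c = true := by
  have hg := h.gt
  simp only [chkGT, Bool.and_eq_true, List.all_eq_true] at hg
  exact hg.1 _ ht

theorem QQ_gtB (h : OK D) {a b c d : ℕ} (ht : (a, b, c, d) ∈ D.QQ) : D.gtB a b c = true ∧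
    D.gtB a c d = true ∧ D.gtB a b d = true ∧ D.gtB b c d = true := by
  have hg := h.gt
  simp only [chkGT, Bool.and_eq_true, List.all_eq_true] at hg
  exact hg.2 _ ht

def TP (D : Dat) (a b c : Fin D.n) : Prop := (a.val, b.val, c.val) ∈ D.TT
def QP (D : Dat) (a b c d : Fin D.n) : Prop := (a.val, b.val, c.val, d.val) ∈ D.QQ

theorem out_lt (h : OK D) : D.o₁ < D.n ∧ D.o₂ < D.n ∧ D.o₃ < D.n := by
  have ho := h.out
  simp only [chkOut, Bool.and_eq_true] at ho
  exact ⟨(D.adjb_lt ho.1).1, (D.adjb_lt ho.1).2, (D.adjb_lt ho.2.1).2⟩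

theorem tf_aux (h : OK D) {t r : ℕ × ℕ × ℕ} (ht : t ∈ D.faces) (hr : r ∈ D.faces) :
    t = r ∨ (∀ x y, x ≠ y → mem3 x t = true → mem3 y t = true → mem3 x r = true → mem3 y r = true → False) := by
  have hf := h.tf
  simp only [chkTf, List.all_eq_true] at hf
  have h1 := hf _ ht _ hr
  obtain ⟨a, b, c⟩ := t
  simp only [Bool.or_eq_true, Bool.and_eq_true, Nat.beq_eq] at h1
  rcases h1 with h1 | h1
  · left
    obtain ⟨a', b', c'⟩ := r
    obtain ⟨rfl, rfl, rfl⟩ := h1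
    rfl
  · right
    intro x y hxy hx hy hx' hy'
    simp only [mem3, Bool.or_eq_true, Nat.beq_eq] at hx hy
    rcases hx with rfl | rfl | rfl <;> rcases hy with rfl | rfl | rfl <;> simp_all

theorem tf_third {a b c x y u v : ℕ} (hxy : x ≠ y) (hux : u ≠ x) (huy : u ≠ y) (hvx : v ≠ x) (hvy : v ≠ y)
    (hx : x = a ∨ x = b ∨ x = c) (hy : y = a ∨ y = b ∨ y = c) (hu : u = a ∨ u = b ∨ u = c)
    (hv : v = a ∨ v = b ∨ v = c) : u = v := by
  omega

theorem mem3_iff {x : ℕ} {t : ℕ × ℕ × ℕ} : mem3 x t = true ↔ x = t.1 ∨ x = t.2.1 ∨ x = t.2.2 := by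
  simp [mem3]

theorem face_mem (h : OK D) {a b c : Fin D.n}
    (ht : TP D a b c ∨ (a = ⟨D.o₁, (out_lt h).1⟩ ∧ b = ⟨D.o₂, (out_lt h).2.1⟩ ∧ c = ⟨D.o₃, (out_lt h).2.2⟩)) :
    (a.val, b.val, c.val) ∈ D.faces := by
  rcases ht with ht | ⟨rfl, rfl, rfl⟩
  · exact List.mem_cons_of_mem _ ht
  · exact List.mem_cons_self

theorem geo (h : OK D) : Geo (gr h) D.ptF (TP D) (QP D) ⟨D.o₁, (out_lt h).1⟩ ⟨D.o₂, (out_lt h).2.1⟩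
    ⟨D.o₃, (out_lt h).2.2⟩ where
  inj := by
    intro a b hab
    have := allBelow_spec (allBelow_spec h.inj a a.2) b b.2
    simp only [ptF, pt, Prod.mk.injEq, Nat.cast_inj] at hab
    simp [hab.1, hab.2] at this
    exact Fin.ext this
  nc := by
    intro u v w huv hwu hwv
    have key : ∀ u v : ℕ, (u, v) ∈ D.EL → w.val ≠ u → w.val ≠ v → ori (D.pt u) (D.pt v) (D.pt w) ≠ 0 := by
      intro u v huv h1 h2
      have hn := h.nc
      simp only [chkNc, List.all_eq_true] at hn
      have := allBelow_spec (hn _ huv) w w.2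
      simp only [Bool.or_eq_true, Nat.beq_eq, P_iff] at this
      rcases this with e | e | e | e
      · exact absurd e h1
      · exact absurd e h2
      · exact e.ne'
      · rw [ori_swap] at e
        intro h0
        linarith
    have h1 : w.val ≠ u.val := fun e => hwu (Fin.ext e)
    have h2 : w.val ≠ v.val := fun e => hwv (Fin.ext e)
    rcases EL_mem h huv with e | e
    · exact key _ _ e h1 h2
    · have := key _ _ e h2 h1
      rw [ori_swap] at this
      exact fun h0 => this (neg_eq_zero.2 h0)
  cross := by
    intro a b c d hab hcd h1 h2 h3 h4 h5 h6
    have := cross_diagB h hab hcd (fun e => h1 (Fin.ext e)) (fun e => h2 (Fin.ext e))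
      (fun e => h3 (Fin.ext e)) (fun e => h4 (Fin.ext e)) h5 h6
    simp only [diagB, List.any_eq_true] at this
    obtain ⟨⟨x, y, z, w⟩, hq, hs⟩ := this
    obtain ⟨g1, g2, -, -⟩ := QQ_gtB h hq
    refine ⟨⟨x, (gtB_lt g1).1⟩, ⟨y, (gtB_lt g1).2.1⟩, ⟨z, (gtB_lt g1).2.2⟩, ⟨w, (gtB_lt g2).2.2⟩, hq, ?_⟩
    simp only [Bool.or_eq_true, Bool.and_eq_true] at hs
    simp only [← sameB_fin]
    exact hs
  uniq := by
    intro a b c d a' b' c' d' hq hr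
    have hu := h.uniq
    simp only [chkUniq, List.all_eq_true] at hu
    have := hu _ hq _ hr
    simp only [← sameB_fin, Ne]
    simp only [Bool.and_eq_true, Bool.or_eq_true, Bool.not_eq_true', ← Bool.not_eq_true] at this
    tauto
  tt := fun a b c ht => gtB_GT h (TT_gtB h ht)
  qq := by
    intro a b c d hq
    obtain ⟨g1, g2, g3, g4⟩ := QQ_gtB h hq
    exact ⟨gtB_GT h g1, gtB_GT h g2, gtB_GT h g3, gtB_GT h g4⟩
  o12 := by
    have ho := h.out
    simp only [chkOut, Bool.and_eq_true] at ho
    exact ho.1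
  o23 := by
    have ho := h.out
    simp only [chkOut, Bool.and_eq_true] at ho
    exact ho.2.1
  o31 := by
    have ho := h.out
    simp only [chkOut, Bool.and_eq_true] at ho
    exact ho.2.2.1
  opos := by
    have ho := h.out
    simp only [chkOut, Bool.and_eq_true] at ho
    exact D.P_iff.1 ho.2.2.2.1
  oin := by
    intro w h1 h2 h3
    have ho := h.out
    simp only [chkOut, Bool.and_eq_true] at ho
    have := allBelow_spec ho.2.2.2.2 w w.2
    simp only [Bool.or_eq_true, Bool.and_eq_true, Nat.beq_eq, P_iff] at this
    rcases this with e | e | e | e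
    · exact absurd (Fin.ext e) h1
    · exact absurd (Fin.ext e) h2
    · exact absurd (Fin.ext e) h3
    · exact e
  cover := by
    intro x hx
    obtain ⟨t, ht, hxt⟩ := cover h.gt h.cov hx
    simp only [cells, List.mem_append, List.mem_flatMap, List.mem_cons, List.not_mem_nil, or_false] at ht
    rcases ht with ht | ⟨⟨q1, q2, q3, q4⟩, hq, rfl | rfl⟩
    · obtain ⟨a, b, c⟩ := t
      have g := gtB_lt (TT_gtB h ht)
      exact Or.inl ⟨⟨a, g.1⟩, ⟨b, g.2.1⟩, ⟨c, g.2.2⟩, ht, hxt⟩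
    · obtain ⟨g1, g2, -, -⟩ := QQ_gtB h hq
      exact Or.inr ⟨⟨q1, (gtB_lt g1).1⟩, ⟨q2, (gtB_lt g1).2.1⟩, ⟨q3, (gtB_lt g1).2.2⟩,
        ⟨q4, (gtB_lt g2).2.2⟩, hq, Or.inl hxt⟩
    · obtain ⟨g1, g2, -, -⟩ := QQ_gtB h hq
      exact Or.inr ⟨⟨q1, (gtB_lt g1).1⟩, ⟨q2, (gtB_lt g1).2.1⟩, ⟨q3, (gtB_lt g1).2.2⟩,
        ⟨q4, (gtB_lt g2).2.2⟩, hq, Or.inr hxt⟩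
  tf := by
    intro a b c a' b' c' ht hr x y u v hxy hux huy hvx hvy hx hy hu hx' hy' hv
    simp only [Fin.ext_iff, Ne] at hxy hux huy hvx hvy hx hy hu hx' hy' hv ⊢
    rcases tf_aux h (face_mem h ht) (face_mem h hr) with e | e
    · simp only [Prod.mk.injEq] at e
      rw [← e.1, ← e.2.1, ← e.2.2] at hv
      exact tf_third hxy hux huy hvx hvy hx hy hu hv
    · exact (e x y hxy (mem3_iff.2 hx) (mem3_iff.2 hy) (mem3_iff.2 hx') (mem3_iff.2 hy')).elim

theorem cr_upper (h : OK D) : (slDrawing (gr h) D.ptF (geo h).inj).crNum ≤ D.QQ.length := by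
  classical
  have h0 : 0 < D.n := lt_of_le_of_lt (Nat.zero_le _) (out_lt h).1
  let f : ℕ → Fin D.n := fun k => if hk : k < D.n then ⟨k, hk⟩ else ⟨0, h0⟩
  have hf : ∀ a : Fin D.n, f a = a := by
    intro a
    simp [f]
  let L : List (Sym2 (Fin D.n) × Sym2 (Fin D.n)) :=
    D.QQ.map (fun q => (s(f q.1, f q.2.2.1), s(f q.2.1, f q.2.2.2))) ++
    D.QQ.map (fun q => (s(f q.2.1, f q.2.2.2), s(f q.1, f q.2.2.1)))
  have hL : L.length = 2 * D.QQ.length := by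
    simp only [L, List.length_append, List.length_map]
    omega
  have hsub : {p : Sym2 (Fin D.n) × Sym2 (Fin D.n) |
      (slDrawing (gr h) D.ptF (geo h).inj).Cross p.1 p.2} ⊆ (L.toFinset : Set _) := by
    rintro ⟨e, g⟩ hp
    obtain ⟨x, y, z, w, hq, hh⟩ := (geo h).cross_diag hp
    simp only [List.coe_toFinset, Set.mem_ofPred_eq, L, List.mem_append, List.mem_map]
    rcases hh with ⟨rfl, rfl⟩ | ⟨rfl, rfl⟩
    · exact Or.inl ⟨_, hq, by simp only [hf]⟩
    · exact Or.inr ⟨_, hq, by simp only [hf]⟩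
  have h1 := Set.ncard_le_ncard hsub (Finset.finite_toSet _)
  rw [Set.ncard_coe_finset] at h1
  have h2 := L.toFinset_card_le
  unfold Drawing.crNum
  omega

theorem edges_lower (h : OK D) : D.EL.length ≤ (gr h).edgeSet.ncard := by
  classical
  have h0 : 0 < D.n := lt_of_le_of_lt (Nat.zero_le _) (out_lt h).1
  let f : ℕ → Fin D.n := fun k => if hk : k < D.n then ⟨k, hk⟩ else ⟨0, h0⟩
  have hf : ∀ k, k < D.n → (f k).val = k := by
    intro k hk
    simp [f, hk]
  have he := h.el
  simp only [chkEL, Bool.and_eq_true, List.all_eq_true, nodupB_iff, Nat.blt_eq] at he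
  obtain ⟨hall, hnd, -⟩ := he
  have hnd' : D.EL.Nodup := List.Nodup.of_map _ hnd
  have hc : (D.EL.toFinset : Set (ℕ × ℕ)).ncard = D.EL.length := by
    rw [Set.ncard_coe_finset, List.toFinset_card_of_nodup hnd']
  have hinj : Set.InjOn (fun e : ℕ × ℕ => s(f e.1, f e.2)) (D.EL.toFinset : Set (ℕ × ℕ)) := by
    rintro ⟨a, b⟩ hab ⟨c, d⟩ hcd heq
    simp only [List.coe_toFinset, Set.mem_ofPred_eq] at hab hcd
    obtain ⟨ha, ha'⟩ := hall _ hab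
    obtain ⟨hc, hc'⟩ := hall _ hcd
    have l1 := D.adjb_lt ha
    have l2 := D.adjb_lt hc
    simp only [Sym2.eq_iff, Fin.ext_iff] at heq
    simp only [hf _ l1.1, hf _ l1.2, hf _ l2.1, hf _ l2.2] at heq
    simp only at ha' hc'
    ext <;> simp only <;> omega
  rw [← hc, ← hinj.ncard_image]
  refine Set.ncard_le_ncard ?_ (Set.toFinite _)
  rintro _ ⟨⟨a, b⟩, hab, rfl⟩
  simp only [List.coe_toFinset, Set.mem_ofPred_eq] at hab
  obtain ⟨ha, -⟩ := hall _ hab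
  have l1 := D.adjb_lt ha
  rw [SimpleGraph.mem_edgeSet]
  change D.adjb (f a) (f b) = true
  rw [hf _ l1.1, hf _ l1.2]
  exact ha

theorem crossing (h : OK D) (hn : 4 ≤ D.n) (hc : D.EL.length + 6 = 3 * D.n + D.QQ.length) :
    crossingNumber (gr h) = D.QQ.length := by
  unfold crossingNumber
  have hg := (geo h).good
  apply le_antisymm
  · exact le_trans (Nat.sInf_le ⟨_, hg, rfl⟩) (cr_upper h)
  · have hne : {k | ∃ E : Drawing (gr h), E.IsGood ∧ E.crNum = k}.Nonempty := ⟨_, _, hg, rfl⟩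
    obtain ⟨E, hE, hk⟩ := Nat.sInf_mem hne
    have h1 := E.cr_lower hn hE
    have h2 := edges_lower h
    omega

theorem conn (h : OK D) (hn : 7 ≤ D.n) : KConnected (gr h) 7 := by
  have hc := h.conn
  simp only [chkConn, Bool.and_eq_true, List.all_eq_true] at hc
  obtain ⟨h1, h2, h3⟩ := hc
  refine kconn_of D.n hn D.adjb (fun a b hab => (D.adjb_lt hab).2) (fun a b => adjb_symm h.adj) ?_ ?_ (gr h)
    (fun a b hab => hab)
  · intro v hv hvn
    have := allBelow_spec h2 v hvn
    simp only [Bool.or_eq_true, Nat.beq_eq] at this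
    by_contra hcon
    rcases this with e | e
    · omega
    · have key : ∀ m, m ≤ v → allBelow (fun y => !(D.adjb v y)) m = true := by
        intro m
        induction m with
        | zero => intro _; rfl
        | succ m ih =>
          intro hm
          simp only [allBelow, Bool.and_eq_true]
          refine ⟨?_, ih (by omega)⟩
          by_contra hb
          exact hcon ⟨m, by omega, by simpa using hb⟩
      rw [key v le_rfl] at e
      simp at e
  · intro x y s hyx hxs hys hxy
    have hxn := (D.adjb_lt hxs).1
    have hsn := (D.adjb_lt hxs).2
    have := allBelow_spec (allBelow_spec h3 x hxn) y hyx
    simp only [hxy, Bool.false_or, Bool.or_eq_true, Nat.beq_eq, List.any_eq_true, Bool.and_eq_true] at this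
    rcases this with e | ⟨⟨a, b, N⟩, hm, hx, hy⟩
    · exfalso
      have e' : (((D.A >>> (D.n * x)) &&& (D.A >>> (D.n * y))) % 2 ^ D.n).testBit s = false := by
        have : (((D.A >>> (D.n * x)) &&& (D.A >>> (D.n * y))) % 2 ^ D.n) = 0 := e
        rw [this, Nat.zero_testBit]
      simp only [adjb, Bool.and_eq_true] at hxs hys
      have t1 : D.A.testBit (D.n * x + s) = true := hxs.2.2
      have t2 : D.A.testBit (D.n * y + s) = true := hys.2.2
      simp [Nat.testBit_mod_two_pow, Nat.testBit_shiftRight, hsn, t1, t2] at e'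
    · simp only at hx hy
      subst hx hy
      have := h1 _ hm
      simp only [certB, Bool.and_eq_true, Nat.beq_eq, nodupB_iff, List.all_eq_true] at this
      exact ⟨_, this.1, this.2.1, this.2.2⟩

theorem final (h : OK D) (hn : 7 ≤ D.n) (hc : D.EL.length + 6 = 3 * D.n + D.QQ.length)
    (hq : 4 * D.QQ.length = 3 * D.n) :
    ∃ (G : SimpleGraph (Fin D.n)) (E : Drawing G), E.IsMaximalOnePlane ∧ KConnected G 7 ∧
      4 * crossingNumber G = 3 * D.n :=
  ⟨gr h, slDrawing (gr h) D.ptF (geo h).inj, (geo h).maximal, conn h hn, by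
    rw [crossing h (by omega) hc, hq]⟩

end Dat

def dat24 : Dat where
  n := 24
  w := 10
  X := 198592246120077518848576342711566579606388596248020127320067437558370424
  Y := 419505420743119687908296890146959584033595780559443973292206897916612683
  H := 1408367668888309171738477720760413580688850740239058518232384390367805459
  A := 122216009948418107940495884950162791141229803569272817944473492129280504971430250520467792179146521315357904655246031544393070425410844157962689501383078608364688747020681470
  TT := [
    (5, 1, 8), (9, 3, 11), (10, 2, 7), (12, 20, 14), (16, 22, 17), (6, 0, 4), (15, 21, 13)]
  QQ := [
    (10, 17, 19, 11), (15, 13, 5, 8), (13, 21, 20, 12), (4, 12, 14, 6), (18, 23, 21, 15), (6, 14, 16, 7),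
    (15, 8, 9, 18), (11, 3, 2, 10), (22, 23, 19, 17), (17, 10, 7, 16), (0, 2, 3, 1), (12, 4, 5, 13),
    (11, 19, 18, 9), (2, 0, 6, 7), (22, 20, 21, 23), (0, 1, 5, 4), (1, 3, 9, 8), (20, 22, 16, 14)]
  EL := [
    (0, 1), (0, 2), (0, 3), (0, 4), (0, 5), (0, 6), (0, 7), (1, 2), (1, 3), (1, 4), (1, 5), (1, 8),
    (1, 9), (2, 3), (2, 6), (2, 7), (2, 10), (2, 11), (3, 8), (3, 9), (3, 10), (3, 11), (4, 5), (4, 6),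
    (4, 12), (4, 13), (4, 14), (5, 8), (5, 12), (5, 13), (5, 15), (6, 7), (6, 12), (6, 14), (6, 16), (7, 10),
    (7, 14), (7, 16), (7, 17), (8, 9), (8, 13), (8, 15), (8, 18), (9, 11), (9, 15), (9, 18), (9, 19), (10, 11),
    (10, 16), (10, 17), (10, 19), (11, 17), (11, 18), (11, 19), (12, 13), (12, 14), (12, 20), (12, 21), (13, 15), (13, 20),
    (13, 21), (14, 16), (14, 20), (14, 22), (15, 18), (15, 21), (15, 23), (16, 17), (16, 20), (16, 22), (17, 19), (17, 22),
    (17, 23), (18, 19), (18, 21), (18, 23), (19, 22), (19, 23), (20, 21), (20, 22), (20, 23), (21, 22), (21, 23), (22, 23)]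
  o₁ := 19
  o₂ := 18
  o₃ := 23
  CC := [
    (4, 2, 1286697325116329132611482425676072493057),
    (4, 3, 1286921233250041745105236226110723727361),
    (5, 2, 1374671050564295524008002021478792962049),
    (5, 3, 1374426403974801419330737244925002260481),
    (6, 1, 1470378639987555910396844284894712442881),
    (6, 3, 1470375471493562669440334601913108541441),
    (6, 5, 1470629817348084873034316766638712299521),
    (7, 1, 1547429166849521015153991437439222165505),
    (7, 3, 1547227022129856736305321304321702244353),
    (7, 4, 1562304361803705464453679508282109861889),
    (7, 5, 1563504517923375279247593329814286376961),
    (8, 0, 1643156861295499673060532212990388224002),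
    (8, 2, 1643154346905483595975973143575854596098),
    (8, 4, 1643408363174582903239696713142840070146),
    (9, 0, 1716199594158493395861334006021843075074),
    (9, 2, 1716039631541318871701105386375633453058),
    (9, 4, 1732295714419820787051632604598439514114),
    (9, 5, 1732424776236434826666167568104554500098),
    (10, 0, 1726856037777706124033789489765268078595),
    (10, 1, 1726854182403755267781289640038525583363),
    (10, 6, 1727128308844224111932079565790929489923),
    (10, 8, 1726673130821015033532013566706381226178),
    (10, 9, 1701793549574890960328302074162874155202),
    (11, 0, 1732297240428618455453329056875342217219),
    (11, 1, 1733647562130280546888436941738349707267),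
    (11, 6, 1732295714419821405680577084183421128707),
    (11, 7, 1732295714430048318373832187142118313987),
    (11, 8, 1732424776209304113421311526202999046338),
    (12, 0, 1893029657631326302049121042989876011013),
    (12, 1, 1893028465715285561147776255953597390853),
    (12, 2, 1897057688077435715972864361529753469249),
    (12, 7, 1902499215171848512607096496835533734209),
    (12, 8, 1892827604087436928362950605975930274114),
    (13, 0, 1897058555472460929834173819286041157637),
    (13, 1, 1897058879991015419847040974355462905861),
    (13, 3, 1897057688077436027647862999287174005057),
    (13, 6, 1902478445825984663447188528397584699397),
    (13, 9, 1896815283083429795798156244186850918722),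
    (14, 0, 1980800243724246220457344677839863050245),
    (14, 1, 1983415969188427220378308683801124671493),
    (14, 2, 1980799051571797929421959027277831078209),
    (14, 5, 1986199040293787409380206211927767781381),
    (14, 10, 1980556651888501240642378913137463152708),
    (14, 13, 1985873441961921888706566915354072997893),
    (15, 0, 2065786571541122693308906032362783252486),
    (15, 1, 2065850066344997931778697471663892631558),
    (15, 3, 2065848879103477431002794905886940987777),
    (15, 4, 2069919639832216191449045362727192895494),
    (15, 11, 2065627563066725804294515068263544676419),
    (15, 12, 2069615130375837807262587523351934685190),
    (16, 0, 1983416512302543968412675294879211880455),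
    (16, 2, 1983417161339651805178387206715153088519),
    (16, 3, 1983415969188427527054130746832901112257),
    (16, 4, 1986157501839714296514014119517589868551),
    (16, 11, 1983215097659657459031919499304535851459),
    (16, 12, 1985873442048422344636351050327125151751),
    (16, 13, 1985873442048418184083906001437474685381),
    (17, 0, 2063086582401267721517935262801777668104),
    (17, 2, 2063150072060225178449932175801176862728),
    (17, 3, 2063148889963602828260567875178698899969),
    (17, 6, 2069878106686425372249781043214968172552),
    (17, 9, 2062969426443898424524970791881779740738),
    (17, 14, 2069615454972361741109666579989345890312),
    (17, 15, 2042179033852885819479436815635830571078),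
    (18, 1, 2065786785226995644557053084335236751369),
    (18, 2, 2065786571541122990614935027384954389058),
    (18, 3, 2065787434264103472098240037810738339849),
    (18, 5, 2069898870644804776018508894409360678921),
    (18, 10, 2065627552687855866058428220420695786052),
    (18, 12, 2069615130458620589475873273530637615686),
    (18, 13, 2069615130458624443074497221764242231305),
    (18, 17, 2042158589160793056386042043173793992971),
    (19, 1, 2063086582401267414437128692331640008714),
    (19, 2, 2063086790942300257539340128807652426370),
    (19, 3, 2063086790942262087394693464130278436874),
    (19, 7, 2069961183436146265549805819461636235393),
    (19, 8, 2062969420977135871975711432338213453834),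
    (19, 14, 2069615454896669469388916565309602701445),
    (19, 15, 2042179033750484966854797299746870431754),
    (19, 16, 2069615454896673917931930404810100580424),
    (20, 4, 2067137107014244457926951212906465779725),
    (20, 5, 2067136574353288098534482700417284235277),
    (20, 6, 2067199739095100335491486936220514668557),
    (20, 7, 2068507340553498118084054695053996852039),
    (20, 8, 2066957099577038348440047152455709360966),
    (20, 10, 2068286316666512280831107829113244668355),
    (20, 15, 2042178433940953034238180681416885928774),
    (20, 17, 2042172005910064312299472119113090101451),
    (20, 18, 2042178384951040937825144955740021117328),
    (20, 19, 2042172005895536046262573653440331018444),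
    (21, 4, 2065786785311214257867929598851540901901),
    (21, 5, 2068487104196206230183012024345962799117),
    (21, 6, 2065786576920377098679283616242113990669),
    (21, 8, 2065850066432949499642305861540912825158),
    (21, 9, 2065869653907798798752722763344783659330),
    (21, 11, 2068286316665235353081732406985600586179),
    (21, 14, 2065786575599090142696028969837771902989),
    (21, 16, 2065627771040656015297991423590519276359),
    (21, 17, 2042172000666516308254938792152124150216),
    (21, 19, 2042172000688433831132740745785242841292),
    (22, 4, 2063086577245651495465290459889535315983),
    (22, 6, 2063086790861795479095190223367528583183),
    (22, 7, 2067199739010862583097245288183829172239),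
    (22, 9, 2066956754009633344127838863530817286466),
    (22, 10, 2063150071986083972202897862933107442632),
    (22, 11, 2063169654391529208819625308159918272963),
    (22, 12, 2063086576162049924051965298318170681359),
    (22, 13, 2062968990530551254033269950340249420741),
    (22, 15, 2042151231241416419901697478670308929862),
    (22, 18, 2042151231260839626582198402944555831434),
    (23, 5, 1976665988332197824416028883451987890192),
    (23, 7, 1979227691604759303645178316890382074241),
    (23, 8, 1976666526465676869320270562324141326352),
    (23, 9, 1979450246618940016795165156324240048144),
    (23, 10, 1976728295823585659400472068702848746052),
    (23, 11, 1979449059377457908866549186653671916554),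
    (23, 12, 1976569170804531689586339851094657336326),
    (23, 13, 1976832140748069366959931851510229786640),
    (23, 14, 1957084752324326463203347333852795306373),
    (23, 16, 1957084826745183640409171874325182046280)]

def dat56 : Dat where
  n := 56
  w := 14
  X := 7831355369091839872394262431096203386294635778763538612735644097166702497532963038580953519791356026550378396325261390660981118638735472911866866929288380547099614822889356811823783279900517956375477715672286987510386516685651237766295
  Y := 4744778063740026246526421816290135853796268988347642466461848283800949356021600608935090554729237887616140303304888608601503703812676776809894708997182761774021145349969615024146819670958565817743754644157898233232611316293929271017997
  H := 4943444658667094536223476817862121769700999189699105603388662524011933716781989390821683434697164282769229453222847680935129198365538483412886585859458465466415743583498056656171882987513246317019263526078124239504332218637071144714240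
  A := 52243245338798354054515332902422711470940262505393352534376065571347315109862375787001923817232675598602172365026012437799049914031307516293064530954209721293534405302309612880080131720544978769398174845285465739883116234840983213182273166415188379557558252149150026007634920999108489262122774836993860000272009127306917128402282561856818417973093440759300983878257287093761715660913219467181781846554532567490404335106570759913187593058227901101053553989535951073700708668416315703593700165305614362132184271103156184134894612810860304627154649034216198804922387911100257105259098742133385432461563754884395864463184476618633144808219736961068153988110632386839482638234782784286440417355209477889849644989780699729558056879312955132963994278596841648216194769551707859407364961766338083319595057948586966224240517419836985133073482555738070326837163708052528715688489523536110787748774319140140193009790556307545169541420073768529290520953854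
  TT := [
    (0, 1, 4), (0, 2, 5), (0, 3, 6), (9, 21, 12), (7, 19, 15), (8, 20, 18), (32, 21, 16), (22, 19, 10),
    (27, 20, 13), (17, 18, 33), (11, 12, 23), (14, 15, 28), (35, 36, 48), (25, 26, 40), (30, 31, 44), (36, 38, 51),
    (26, 39, 43), (31, 37, 47), (34, 49, 39), (29, 45, 38), (55, 54, 50), (55, 52, 42), (55, 53, 46)]
  QQ := [
    (0, 4, 7, 2), (0, 5, 8, 3), (6, 9, 1, 0), (11, 10, 4, 1), (14, 13, 5, 2), (17, 16, 6, 3),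
    (9, 12, 11, 1), (7, 15, 14, 2), (3, 8, 18, 17), (6, 16, 21, 9), (4, 10, 19, 7), (5, 13, 20, 8),
    (16, 17, 33, 32), (22, 10, 11, 23), (27, 13, 14, 28), (34, 33, 18, 35), (23, 12, 25, 24), (29, 28, 15, 30),
    (35, 18, 20, 36), (12, 21, 26, 25), (30, 15, 19, 31), (20, 27, 38, 36), (26, 21, 32, 39), (19, 22, 37, 31),
    (36, 51, 50, 48), (26, 43, 42, 40), (47, 46, 44, 31), (34, 35, 48, 49), (25, 40, 41, 24), (30, 44, 45, 29),
    (34, 39, 32, 33), (24, 37, 22, 23), (29, 38, 27, 28), (43, 39, 49, 54), (37, 41, 52, 47), (38, 45, 53, 51),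
    (48, 50, 54, 49), (42, 52, 41, 40), (44, 46, 53, 45), (42, 43, 54, 55), (55, 46, 47, 52), (55, 50, 51, 53)]
  EL := [
    (0, 1), (0, 2), (0, 3), (0, 4), (0, 5), (0, 6), (0, 7), (0, 8), (0, 9), (1, 4), (1, 6), (1, 9),
    (1, 10), (1, 11), (1, 12), (2, 4), (2, 5), (2, 7), (2, 13), (2, 14), (2, 15), (3, 5), (3, 6), (3, 8),
    (3, 16), (3, 17), (3, 18), (4, 7), (4, 10), (4, 11), (4, 19), (5, 8), (5, 13), (5, 14), (5, 20), (6, 9),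
    (6, 16), (6, 17), (6, 21), (7, 10), (7, 14), (7, 15), (7, 19), (8, 13), (8, 17), (8, 18), (8, 20), (9, 11),
    (9, 12), (9, 16), (9, 21), (10, 11), (10, 19), (10, 22), (10, 23), (11, 12), (11, 22), (11, 23), (12, 21), (12, 23),
    (12, 24), (12, 25), (12, 26), (13, 14), (13, 20), (13, 27), (13, 28), (14, 15), (14, 27), (14, 28), (15, 19), (15, 28),
    (15, 29), (15, 30), (15, 31), (16, 17), (16, 21), (16, 32), (16, 33), (17, 18), (17, 32), (17, 33), (18, 20), (18, 33),
    (18, 34), (18, 35), (18, 36), (19, 22), (19, 30), (19, 31), (19, 37), (20, 27), (20, 35), (20, 36), (20, 38), (21, 25),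
    (21, 26), (21, 32), (21, 39), (22, 23), (22, 24), (22, 31), (22, 37), (23, 24), (23, 25), (23, 37), (24, 25), (24, 37),
    (24, 40), (24, 41), (25, 26), (25, 40), (25, 41), (26, 32), (26, 39), (26, 40), (26, 42), (26, 43), (27, 28), (27, 29),
    (27, 36), (27, 38), (28, 29), (28, 30), (28, 38), (29, 30), (29, 38), (29, 44), (29, 45), (30, 31), (30, 44), (30, 45),
    (31, 37), (31, 44), (31, 46), (31, 47), (32, 33), (32, 34), (32, 39), (33, 34), (33, 35), (33, 39), (34, 35), (34, 39),
    (34, 48), (34, 49), (35, 36), (35, 48), (35, 49), (36, 38), (36, 48), (36, 50), (36, 51), (37, 41), (37, 47), (37, 52),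
    (38, 45), (38, 51), (38, 53), (39, 43), (39, 49), (39, 54), (40, 41), (40, 42), (40, 43), (40, 52), (41, 42), (41, 47),
    (41, 52), (42, 43), (42, 52), (42, 54), (42, 55), (43, 49), (43, 54), (43, 55), (44, 45), (44, 46), (44, 47), (44, 53),
    (45, 46), (45, 51), (45, 53), (46, 47), (46, 52), (46, 53), (46, 55), (47, 52), (47, 55), (48, 49), (48, 50), (48, 51),
    (48, 54), (49, 50), (49, 54), (50, 51), (50, 53), (50, 54), (50, 55), (51, 53), (51, 55), (52, 55), (53, 55), (54, 55)]
  o₁ := 24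
  o₂ := 37
  o₃ := 41
  CC := [
    (2, 1, 6105348878457134925762014121121036167488249681432577),
    (3, 1, 7311201064683058353617184197606484207438539459940353),
    (3, 2, 7327625249343494564814367784436508385273976962703361),
    (4, 3, 485064317059214021817852434094537092958082786797318145),
    (5, 1, 516521108695506670798152178882471387982652710610292737),
    (5, 4, 8089293822766139517513978592670111887816059810492417),
    (6, 2, 531803023747123530414612390467339634131078536428539905),
    (6, 4, 8309383265091764647875603186813972891817668362903553),
    (6, 5, 8427363242504324095989825875589097049630306349625345),
    (7, 1, 1859971442423806303909776312079463394291825537025),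
    (7, 3, 31575786310364692713788833040372472623800257232241451009),
    (7, 5, 1872161263290000951582262941891200102358327504897),
    (7, 6, 31575698116413646769606045908507886560391408286913019905),
    (8, 1, 33133747498072432242868058661360921517974568599618088961),
    (8, 2, 1958518452216453746158474373006465449771743596545),
    (8, 4, 33133664525195844445026226042907408763659991584067035137),
    (8, 6, 1970393960643276358727753509556229065772091064321),
    (8, 7, 517612727822193078913632454917769908292555702100578305),
    (9, 2, 34518029698815709657281099941725139853007155872425070593),
    (9, 3, 2057065431177519428970923987759856030783741124609),
    (9, 4, 2047623172619477512023229792706462853478301573121),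
    (9, 5, 34518028197401965423718806439752806196743284964262686721),
    (9, 7, 536773059879539559383607575415558641940147753284292609),
    (9, 8, 539342608146077991769023150927033387501763476050436097),
    (10, 0, 8435439047011252791322811270942287246413826),
    (10, 2, 9206063718554160245362658650401905533979187509198977),
    (10, 6, 579678350816482495261601024045758716726541316449898498),
    (10, 9, 141492149035895643737828165341634829386549933903874),
    (11, 0, 8506678038964779227662130134915121644851202),
    (11, 2, 589093261346485242716237944391816399183289191092191361),
    (11, 6, 9133975992469951909945335537984141019161382511448066),
    (11, 7, 143821252437442941953573899258646353264169945661569),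
    (12, 0, 9589247495643010435806123811175596656992258),
    (12, 4, 38061972463935603449106060582889487048183910402),
    (12, 6, 2513762439183739324695547573383368297597443809282),
    (12, 10, 9291606762749218326341692238003122408280066),
    (13, 0, 10193845521267558900578267777941006865948675),
    (13, 3, 11083003018549455158439890397128865736049338965557441),
    (13, 4, 700515313440163898544538208649732809300927363734310915),
    (13, 7, 170996326612537425935262880080403210861670848532483),
    (14, 0, 10276558282368608093563690724079619100663811),
    (14, 3, 709129777746177999004754940889519424888884291396174017),
    (14, 4, 11034370434009089129555232004287982283213501309128707),
    (14, 8, 173149832204401028633213224126257290377414095405249),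
    (14, 10, 706199692702019430821427286202655553601727466505240773),
    (15, 0, 11276534955193506219700075355440641967423491),
    (15, 4, 2956075447019539522686150980923302979114413096963),
    (15, 5, 45288835183966418115172295996857156020931137539),
    (15, 10, 189173803149187621346201224730926672014019294920901),
    (15, 13, 11055716954335041309850405553727356365201411),
    (16, 0, 7736830412264750589012210317049321073771205),
    (16, 1, 8307201199861481657783687580438841249510512481117707),
    (16, 5, 531730388235245575099297395870739504951560826958272270),
    (16, 8, 132338366345852920553585091247831329075806985402645),
    (16, 11, 531660876791152082341452863981502395050317401031030424),
    (16, 12, 128638037358019051582851212652143684945448376993883),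
    (17, 0, 6735379385971680582396100800302490447078210),
    (17, 1, 468968027207908272644805312020571240523277731272725901),
    (17, 5, 7231534588455911901437250142353702172748467301152591),
    (17, 9, 114494147268554126235319683247664929224557199624278),
    (17, 13, 462818213661206848561843234269770563133737029499046365),
    (18, 0, 7350123197026188749503626482569213498238026),
    (18, 5, 1918624757010882793615494152370134641599087911235),
    (18, 6, 30107078758551950588755210023221229083988330641),
    (18, 13, 122791984464275614661707083494584946386180988490255),
    (18, 16, 7350361028192427125444647086709480910360610),
    (19, 0, 10961013444967350580318159111683878824734725),
    (19, 1, 46757140242474183753336863488559746449426927621),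
    (19, 2, 46686066898048988864438538908047319086938488837),
    (19, 11, 730580219054671177817908914943726834327060485),
    (19, 14, 2987908202441295455582764038994025006094890828099),
    (20, 0, 9838924753065763106678952016295101742588999),
    (20, 2, 40297550369214504950486046773514857608709272840),
    (20, 3, 40300261568935952416135445542148306505079867537),
    (20, 14, 624524661028565854478431186746671126210078608),
    (20, 17, 1735846456150856962684854342072248440108777474338),
    (21, 0, 9191288593986831480323023564476542120760457),
    (21, 1, 39458855730099819146535782394320766411787755717),
    (21, 3, 39534540750076958861628583625700885544071596114),
    (21, 11, 2525366703600854411181519345136980809144449118731),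
    (21, 17, 617727111309413705078833565818517288334159905),
    (22, 1, 2945906490591624430231988506861985052744112542794),
    (22, 4, 2945906278334867666390680929705012748260598203336),
    (22, 7, 12066193786519968410738081798222925786949046544754447),
    (22, 9, 12066440204491376854723845628156850002722445469268049),
    (22, 12, 178294199059285037654647992677780892576410),
    (22, 15, 11974964725048177976470271417791137101740405929216862),
    (23, 1, 37601497730563425152551835928682746669810476293),
    (23, 4, 154015748208088694312513100307585525747108683712916),
    (23, 7, 630848786749997734441249042434048764641258497383336340),
    (23, 9, 154006306988620667620301272488594917766121880371521),
    (23, 19, 594398408278799932436519494371814438743355430),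
    (23, 21, 2375512112740545081838460613582545064397625801512),
    (24, 1, 154015734195737301393620151803353514475883377878277),
    (24, 9, 9856401542111302273261600131064928651932499246137665),
    (24, 10, 154020275250312342342480327616412922933662828464532),
    (24, 11, 2406562748053239029367933888033716800223189296389),
    (24, 19, 37601501674313356505437077486545918128349900838),
    (24, 21, 2375479222973074494324669538721026980273370435857),
    (25, 1, 10296384660162945153111804992929142351825248979591425),
    (25, 6, 2699131864859824326987192297612151511800988079374933854354),
    (25, 9, 160880796006899450770044977811711306743439423579271),
    (25, 10, 10296376111884463326010059521815300164356208968205320),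
    (25, 11, 160880943973780525748574625857158776178701232046603),
    (25, 16, 2698734225057595053370260592528986582220993242316803590690),
    (25, 22, 2513763699216608783468625886370705746247828331488),
    (26, 1, 9869064330690566697822146672061069519964857297933386),
    (26, 6, 9869169461630171493177272726858659826898580594493521),
    (26, 9, 154205557377710715975568789560109120988849052059729),
    (26, 11, 9868090677785784793998130271328728020187571433050562),
    (26, 16, 9869066848354320182140770625976231659258963566927905),
    (26, 17, 631620269812846690989499190459525650277914487805845537),
    (26, 23, 37116161357812986960925541054231022494588104843),
    (26, 24, 579940021689362908167878799012134399038464728),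
    (27, 2, 2785008008107338629053656654515298505096183492865),
    (27, 5, 2785008011102415740443946374371322450391907587268),
    (27, 7, 11407386307075621537969611426436560226895537835634821),
    (27, 8, 11407392838077944887639718556295299694748930744518995),
    (27, 15, 163374090579330602472509648603453047401312),
    (27, 18, 11492409354663134216565577736537038677288760673447973),
    (28, 2, 44692438236179150033561385412021818312018261318),
    (28, 5, 183060238782223251249562815806421688661272904075733),
    (28, 7, 183053764954458840397461905439768138306642616603009),
    (28, 8, 749814838790604571798012229011156702077810446635108821),
    (28, 19, 2832344299158276392250872544201047014050679684134),
    (28, 20, 707301721067382463327935449346530680286273575),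
    (29, 2, 183060226500889565683324315317213284875621667861830),
    (29, 7, 11715438828285788395951519070835101479413829307552129),
    (29, 13, 183064832726343457986171167391300383710564985604565),
    (29, 14, 2860382940072573677829810422514712521288609592646),
    (29, 19, 2832311038986886987131876588938229755722574860427),
    (29, 20, 44692441834334052201737698573816416036956028967),
    (30, 2, 12108095774613603895753688301343987616034196341964929),
    (30, 4, 3174061840795399806212938324434057181420628385068625323532),
    (30, 7, 189188828513754309680823621024575486493008057697029),
    (30, 10, 3173809719386893335897655845294178800525835294058948790680),
    (30, 13, 12108087224914279588516643194374179773662262092256457),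
    (30, 14, 189188930458301281416341307942990071035563940852302),
    (30, 22, 3139284125780382147010652474566632263120183002969866951718),
    (30, 27, 2991348365028786020321759935562740482237317737701),
    (31, 2, 11769290514514757816084203320622928376830724916953217),
    (31, 4, 11769392767629216269192730965713947766361824142976524),
    (31, 7, 183896591536331404850738819841855838604961464812293),
    (31, 10, 11769294391093149459340931145156585257722868914981272),
    (31, 11, 753234835357681502842485700278584013219251332045080984),
    (31, 14, 11768044257552165741332203044365457977316323787546694),
    (31, 23, 2101358455647459844765306565844936569747927781414),
    (31, 24, 2101358582240828783510363356077246057645609951270),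
    (31, 28, 44252753123518569667730895631151179632756919134),
    (31, 29, 691449267555123128688987102501943613232963629),
    (32, 3, 2484883184821480397927035163582088033976557504659),
    (32, 6, 2484882954294797994303035345257184057882843423940),
    (32, 8, 10178087295310349151463272327056723538322815139973267),
    (32, 9, 10177928808131866275752784071017588847426184948560129),
    (32, 12, 10103909285846000382292537174390149175646586999411020),
    (32, 18, 150734155193136140479236393785533508235298),
    (32, 25, 2648679195829061618517372232855471780540646535591843006873),
    (33, 3, 27123979693039979467705266883016620026636670343),
    (33, 6, 111439901352505458983562272815898723759390540171350),
    (33, 8, 111099820841084578021150421684765283602757232976321),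
    (33, 9, 456462063224393218659951889638774412813444451438430294),
    (33, 20, 1735937745237956102854513074623870497952399888590),
    (33, 21, 425114250946896392339864230343554974096666657),
    (33, 26, 1789498502165459045112132263501565813331122110497),
    (34, 3, 111146477533649754577326593623362675057589322516561),
    (34, 8, 7113385119613940867249546176530895203196413313812562),
    (34, 16, 111440630363624806607544966638910196763172937015329),
    (34, 17, 1736663711474243546235952690581144990838086049825),
    (34, 20, 1736666288930415881881475142898245178027594093705),
    (34, 21, 27209352598790088777667455860049281334605582369),
    (34, 26, 1741265253590864856058082011792475535418503553057),
    (35, 3, 7892135976935155946501330349766079901066809743771793),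
    (35, 5, 2060130467739902449804539290399897370429910739007249196169),
    (35, 8, 122793272884076038184150896682832692594708505954450),
    (35, 13, 2060132338468478506373429739376215529151898889136691024134),
    (35, 16, 7911291475689106361972662598351935329855009270403106),
    (35, 17, 123588656196611355961489074613077255579388917714978),
    (35, 27, 2060132415753832073769971513437417678459698781093892473231),
    (35, 32, 1926879513409567097230125357217709700284055433250),
    (36, 3, 10558710393160191245020695205934717224133692659746961),
    (36, 5, 10557963081333584769193674754870937169421471428256905),
    (36, 8, 164967465911352405348003376269812683289945073404050),
    (36, 13, 10480859944717005766102032897734681829811612805566726),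
    (36, 14, 670775036460956080415758464295301377561696271105015875),
    (36, 17, 10558441607549714114822545086896113714640627093473570),
    (36, 28, 2558803696103756084666565180829912836387704471591),
    (36, 29, 2558803534545709330791453374271018529886958645287),
    (36, 33, 40277259748778600995085312720703760337966870564),
    (36, 34, 629332184263923817255595772942812564898910244),
    (37, 4, 188538001740942563363515786943868995979790797857217),
    (37, 7, 772236383334932139535113148907449894291498248278131075),
    (37, 10, 2946017780928220146617362376402457564594322367116),
    (37, 11, 2946021478791322984409929511748156449848249918858),
    (37, 12, 136144855765114598360219876753858692123290),
    (37, 15, 187106732890532974487476167858353892717635014183389),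
    (37, 25, 136144855766079189995820906485742161473578),
    (37, 30, 11974830905070829734308018648252074584431371057580510),
    (38, 5, 176845990046847816386556919285283604131083509191876),
    (38, 8, 724361225502874137254665444033062826283274302301145427),
    (38, 13, 2763218593242577375866528327763461351351680914633),
    (38, 14, 2763161640487019285915619571230628296426092048974),
    (38, 15, 163374092896574492334050724253907219660872),
    (38, 18, 170913000558168959382596691800504037067001088319525),
    (38, 30, 163374092897775472186484446636859857961006),
    (38, 35, 10938432416851587392863484260840896253410242751246373),
    (39, 6, 159032509077637267601235576458857404295454977951825),
    (39, 9, 651387444444281715514944993512311729177643135327275089),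
    (39, 12, 157921649163330638455682805511234919052161398740042),
    (39, 16, 2485061360299670567813124133395779466875419893793),
    (39, 17, 2485067168833297153730354571480971363440027377697),
    (39, 18, 303666130496271673878629110778816230852690),
    (39, 25, 10106985537511457576170240459465934998062508420698765),
    (39, 35, 303617401084532753930722753159484682671251),
    (40, 12, 2466863968555442976800962075893106816563160459672),
    (40, 21, 10104274819444904404482160706717849325282088348906250),
    (40, 22, 10178994116784688591779175719977236416008289906592422),
    (40, 23, 159030226867628418088474348324930922528040886733478),
    (40, 32, 2648783104409333626243558569072018067854728633252161261842),
    (40, 37, 9479957040853535523954789346476753938481194),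
    (40, 39, 157879776025374758327008945654806782663996655488099),
    (41, 12, 2375497971910911088440629475728037278188999281048),
    (41, 19, 9869064403171453928209922858218538139883657557987366),
    (41, 21, 622723652312315304008368459670113159495121077595108106),
    (41, 22, 154188980549658451695178563997257614798451392167974),
    (41, 23, 2375497971910911118764896366693432351200818024486),
    (41, 26, 579956595142554291983532664563397488602301078),
    (41, 31, 2409446384625073131920684926817405048552957800486),
    (42, 12, 157923162114171895638429477821004397613878751005273),
    (42, 21, 10107088200452489620649257356846422354137035480238682),
    (42, 24, 159030912307092100533001503352504886113731457753129),
    (42, 25, 2467549408051215833295664554798550324507656233001),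
    (42, 32, 2649512529219057457245817944210081729304094129570887931542),
    (42, 37, 38833964997865456019727169717069246437127621209),
    (42, 39, 2467550897932364986485384686830426200297405847190),
    (43, 12, 646853371945404850179692740126379499381057922753890838),
    (43, 21, 157923162114184047631437069734520723117550657183784),
    (43, 24, 651390618363186192428656353166643595271991713109018010),
    (43, 25, 10107083936646953820001053095890621377355381892975126),
    (43, 32, 157923253038130760468697892553384076141496034222120),
    (43, 33, 10294898609563815109002982364708448598636116686999592),
    (43, 34, 160857790775880810958943583389145689660859173183528),
    (43, 35, 10298015835004700240455045168767545233976032364333602),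
    (43, 41, 160218382564435358894258106540188022905832604787545),
    (44, 15, 2923694761171346098459461356483638274011735189981),
    (44, 19, 11975453747039289963107328945214503802852098568995784),
    (44, 22, 3139300655872664207706666370749903477828628691464897433740),
    (44, 27, 12067528377019611792735091101681489479252585454242727),
    (44, 28, 188534402702196016709198234871710104113557204896679),
    (44, 37, 187116900436440964241884791342787418444500333939289),
    (44, 38, 11238798172664067101859883252143118488911918),
    (44, 41, 780468119086906577225687755964859667541484283816782633),
    (45, 15, 2832328743093032228739716031561698227230022306269),
    (45, 19, 742479370529022983661155309288094883735488161252230088),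
    (45, 20, 11769290676504689449663575954954233122973058079678503),
    (45, 27, 183875844067458631194724541315665612092817851609127),
    (45, 28, 2832328743093032269130930641275376002856034304039),
    (45, 31, 691487798958407961955822693218382598303183380),
    (45, 36, 2873369135871248855611052950472402365762551562279),
    (46, 15, 187153285833494243841700512864048114135400711981918),
    (46, 19, 11977798986218782637344615344915252333975344588524383),
    (46, 22, 3139908137443109980512069881187361886435549562842573363156),
    (46, 29, 188534978032154196224499475669658621125835819769901),
    (46, 30, 2924270091168285979963344251594313182470081798189),
    (46, 37, 2924267328448708377581400641708718882757430925268),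
    (46, 38, 46038847948025811281995273599999981987355429726),
    (46, 40, 780611489409733788070560233767894761747387199859504666),
    (46, 41, 12194850546990298973813110461284566096463742474470873),
    (46, 42, 12197111794870599223525986878922181853807130231186267),
    (46, 43, 49958834466775620387658957972380544124268900722880694440),
    (47, 15, 766579952989701585329150302136335797225106402629912980),
    (47, 19, 187153103860273061782775138801402810192980374548518),
    (47, 22, 187153103861118218356563433124767842603958983561254),
    (47, 23, 12107160457931011766980846391894340499226212558278694),
    (47, 24, 189174382155172058730972554541516057238377129484326),
    (47, 25, 12109364423929646891559644325356053873121853935454616),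
    (47, 29, 772239271482083840764930167872087971505479430032221471),
    (47, 30, 11977811765464090543392712231254021349620549771331988),
    (47, 40, 189207952254570988522859635189908728503645151693209),
    (47, 42, 2956102257451730213556639452435451638993958102633),
    (47, 43, 774924189882448012531458798266318316271901271746249563),
    (47, 45, 189905135966334959420344350007368627360662803792926),
    (48, 18, 5085897246124696721707067767963176251058336972835),
    (48, 20, 20831806218455706044521562160228901453342064413509843),
    (48, 27, 5481346875068871132705045833300160048143412917057427944014),
    (48, 32, 20831788792596142186947465812135404190824972235710499),
    (48, 33, 325497417761880844936578443074606251862814913347619),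
    (48, 38, 326713722702476956440792827887373048981233093874588),
    (48, 39, 19169188713806360179298232839742754701582371),
    (48, 42, 1317296617852258879924103662509857192869958897444730971),
    (48, 43, 321605619596256658313672292375710946212375331342568),
    (48, 45, 1338215279447162270029473512166108668478276620825978719),
    (49, 18, 5086207039722432742323719726379818676801180418083),
    (49, 20, 1338219359127706057475964492554422544269546024053246163),
    (49, 21, 20833103559705632916514030930633831806654604288198881),
    (49, 26, 5085301609473921696523193228619723042334795368673),
    (49, 32, 325517250508191248621693767058147268972815647383587),
    (49, 33, 5086207040568881233362160987877443816732324151331),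
    (49, 36, 1241816918819152089484284673627769334322432211),
    (49, 40, 1333081305099912363425545918062450233395132113814951322),
    (49, 42, 20582681533319996668941708336833189349423601173227177),
    (50, 18, 331343430301561012879170350753453860315690822938661),
    (50, 20, 21231096494084465727138328570829799060568647412367397),
    (50, 27, 5565604558144625835380285856932607647642244106336246779941),
    (50, 34, 331343424327596110643490755901509334983395170847076),
    (50, 35, 5177241191018694628732298792581582288467850891301),
    (50, 38, 5183362509657830323952739620156572870905930272805),
    (50, 39, 80907403101523864283349873488857401032022579490),
    (50, 42, 20957112605560129227211337937118909812977019432036009),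
    (50, 43, 5116482569717663116831409986822985392022694799451),
    (50, 44, 1358523472194908738454503784036855347942578848775952862),
    (50, 45, 21226929253049206541359289884578778486737538569996647),
    (50, 46, 20957173938538505133062424296235682954890289805162413),
    (50, 47, 85840583447486739028057869871016037484923950844551746592),
    (51, 18, 1357632899873590911551400042620179730241540999058640933),
    (51, 20, 331343430345901638754442698012637254095881415847973),
    (51, 27, 331715561791262984584822376203121023692218822717477),
    (51, 28, 21229795638895674414605217370568532293891834936822108),
    (51, 29, 331715556857704767152054762927133274205547971479900),
    (51, 30, 21229774003793560592814337390047025420136047941146398),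
    (51, 34, 1357629871100724787091423331272794620204912903296125284),
    (51, 35, 21213014060537652321452336281405876706474298051481637),
    (51, 42, 85840221601886319995258221918155014661793294998448515163),
    (51, 43, 1341253462544179492386839324965081955272616660767754408),
    (51, 44, 331670732344005797610697723601435519412705598752607),
    (51, 46, 5116460252882173303089297893518266787776286487584),
    (51, 47, 1341253576927379465078462505530197830242207928346772774),
    (51, 49, 331396716450199319821801802901813748896442148981092),
    (52, 19, 21259683970841864023449730330107603469024797435195430),
    (52, 22, 21212997071350699058850074146261685480806907497517094),
    (52, 23, 331453080338775242210458884233224767743653031809062),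
    (52, 24, 80921163538258406672466984315809614443149692966),
    (52, 25, 5178954328970179691877517999622340850719282956696),
    (52, 26, 80907367670210662356034721255613812042394396173),
    (52, 31, 81145795328086901149100559368547267452615356454),
    (52, 43, 5116342101576924944014070599651437619950978651560),
    (52, 44, 21267840350709391084727856389041718543095885352143264),
    (52, 45, 1360393556801240737162541374580047344495801419580990751),
    (52, 50, 1341218383858668379448858054866942102927132795905046309),
    (52, 51, 85837977224536211174552218579031276345271535176126629735),
    (53, 20, 21213014465462432438204147062528197911534962321506343),
    (53, 27, 21205979542209343999269658358801779327148915663691815),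
    (53, 28, 331815555970672826733758489178628460470382779293735),
    (53, 29, 81009659157166692524204114174342876924806877223),
    (53, 30, 5184618021698022470586842997464075493310115088861),
    (53, 31, 80996592861137014807719130922852549274072414032),
    (53, 36, 81169490210225803720759710120946293362545770535),
    (53, 42, 1341242138790881679081376109836977755208056135956441179),
    (53, 43, 85839497277673484761595391560918766031767676742880610472),
    (53, 47, 5116432719441125381779199739872797358182924354854),
    (53, 48, 21273692067643619550329928233715539595860776319977957),
    (53, 49, 1357400772533781285568619738788272405470083214527854948),
    (53, 52, 20956908418826408691998572050721104445912438156654186),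
    (54, 21, 21236201397667174378014923869312794028184926239436840),
    (54, 26, 81122101113277580411889439969691113028394856488),
    (54, 32, 21229805881751687215689279107182946829897191582969896),
    (54, 33, 332182381293224570214412382709497849029777223979048),
    (54, 34, 81099215010750647000106884202645008984063217704),
    (54, 35, 5190349661561428933587899775008964261720703633954),
    (54, 36, 81085787279478092279804188321235786891811522707),
    (54, 40, 21261999829707666719315385189547328843305173432142363),
    (54, 41, 1358897267051626414192577789292280682371366012883994010),
    (54, 46, 1341236678287480481882921389637571313220976481726416352),
    (54, 47, 85839151449821573037667596998577687402217328641782109734),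
    (54, 51, 5116393344000917455323125142206732331385663075687),
    (54, 52, 20956824129030494735075342702248701903165469296256682),
    (54, 53, 20956747137031011537987794006388218320619645930162094),
    (55, 26, 19382554920699643147980580748884291671474219),
    (55, 31, 19061328304023542279255244345330068194498135),
    (55, 36, 19431556869227086808711896484926985471924371),
    (55, 37, 19384372951527970863036174782605591186770666),
    (55, 38, 18820813434008912936532965631362313022023957),
    (55, 39, 19169349337147591350983754216378657844234971),
    (55, 40, 19384781626822832098281547795141118570709035),
    (55, 41, 19384389749966271207607022686535403875504171),
    (55, 44, 18820813678167070247748306081699335273542943),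
    (55, 45, 18820813438733700245613263989927776787453726),
    (55, 48, 19169349325556192080596652140382202511603811),
    (55, 49, 19169349336979306077020969484494493169399528)]

theorem ok24 : Dat.OK dat24 where
  adj := by decide +kernel
  inj := by decide +kernel
  el := by decide +kernel
  nc := by decide +kernel
  cross := by decide +kernel
  uniq := by decide +kernel
  gt := by decide +kernel
  out := by decide +kernel
  cov := by decide +kernel
  tf := by decide +kernel
  conn := by decide +kernel

theorem ok56 : Dat.OK dat56 where
  adj := by decide +kernel
  inj := by decide +kernel
  el := by decide +kernel
  nc := by decide +kernel
  cross := by decide +kernel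
  uniq := by decide +kernel
  gt := by decide +kernel
  out := by decide +kernel
  cov := by decide +kernel
  tf := by decide +kernel
  conn := by decide +kernel

/-- For each `n ∈ {24, 56}`, there is a 7-connected maximal 1-plane graph
on `n` vertices with crossing number `3n/4`. -/
theorem stmt_18 :
    ∀ n ∈ ({24, 56} : Set ℕ), ∃ (G : SimpleGraph (Fin n)) (D : Drawing G),
      D.IsMaximalOnePlane ∧ KConnected G 7 ∧
      4 * crossingNumber G = 3 * n := by
  intro n hn
  rcases hn with rfl | rfl
  · exact Dat.final ok24 (by decide) (by decide +kernel) (by decide +kernel)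
  · exact Dat.final ok56 (by decide) (by decide +kernel) (by decide +kernel)
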